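/- arXiv:math-ph/0609008 — 10 statements merged into one kernel-verified Lean document; each statement's English description precedes it below -/
import Mathlib

section
/- Let n ≥ 1 and let Φ : (ℝ³)ⁿ → (ℝ³)ⁿ be a linear map. Define the angular momentum pairing Ω(X,Y) = Σ_{i=1}^{n} xᵢ × yᵢ ∈ ℝ³ for X = (x₁,…,xₙ), Y = (y₁,…,yₙ) ∈ (ℝ³)ⁿ, where × is the cross product on ℝ³. Then Ω(Φ(X),Φ(Y)) = Ω(X,Y) holds for all X, Y ∈ (ℝ³)ⁿ if and only if Φ is a linear isometry of (ℝ³)ⁿ ≅ ℝ^{3n} (with the standard Euclidean norm) that commutes with the diagonal O(3)-action, i.e. Φ(g·x₁,…,g·xₙ) = (g·x'₁,…,g·x'ₙ) for every orthogonal g ∈ O(3), where (x'₁,…,x'ₙ) = Φ(x₁,…,xₙ). -/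
open Matrix

/-!
Identify `(ℝ³)ⁿ` with `ℝⁿ ⊗ ℝ³`. Each of the two conditions forces `Φ` to map `ℝⁿ ⊗ a` into itself
for every `a : ℝ³`:

* if `Φ` preserves `Ω`, then `Φ` is injective because `Ω` is nondegenerate, hence surjective, and
  `ℝⁿ ⊗ a` is exactly the set of `X` with `a ⬝ Ω(X, Y) = 0` for all `Y`;
* if `Φ` commutes with `O(3)`, then it commutes with the half-turn about `a`, whose fixed space
  is `ℝⁿ ⊗ a`.

A linear map preserving all these subspaces has the form `A ⊗ id` for an `n × n` matrix `A`
(`exists_matrix`). For such a map, both preservation of `Ω` and being an isometry amount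
to `A` preserving the dot product of `ℝⁿ`, and commutation with `O(3)` is automatic.
-/

/-- A linear map that preserves `ℝⁿ ⊗ a` for every `a : ℝ³` is of the form `A ⊗ id`. -/
lemma exists_matrix {n : ℕ} (Φ : (Fin n → (Fin 3 → ℝ)) →ₗ[ℝ] (Fin n → (Fin 3 → ℝ)))
    (H : ∀ (u : Fin n → ℝ) (a : Fin 3 → ℝ) (i : Fin n),
      crossProduct (Φ (fun l => u l • a) i) a = 0) :
    ∃ A : Matrix (Fin n) (Fin n) ℝ, ∀ X i k, Φ X i k = (A *ᵥ fun j => X j k) i := by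
  have key : ∀ (u : Fin n → ℝ) (i : Fin n) (k m : Fin 3),
      Φ (fun l => u l • Pi.single k (1 : ℝ)) i m =
        if m = k then Φ (fun l => u l • Pi.single 0 (1 : ℝ)) i 0 else 0 := by
    intro u i k m
    have h0 := H u (Pi.single 0 1) i
    have h1 := H u (Pi.single 1 1) i
    have h2 := H u (Pi.single 2 1) i
    -- The sums `e₀ + e₁` and `e₀ + e₂` tie together the scalars found on the three axes.
    have h3 := H u (Pi.single 0 1 + Pi.single 1 1) i
    have h4 := H u (Pi.single 0 1 + Pi.single 2 1) i
    have e : ∀ a b : Fin 3 → ℝ, Φ (fun l => u l • (a + b)) =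
        Φ (fun l => u l • a) + Φ (fun l => u l • b) := by
      intro a b
      rw [← map_add]
      congr 1
      funext l
      simp
    rw [e] at h3 h4
    simp [cross_apply] at h0 h1 h2 h3 h4
    fin_cases k <;> fin_cases m <;> simp <;> linarith
  obtain ⟨A, hA⟩ : ∃ A : Matrix (Fin n) (Fin n) ℝ, ∀ (j : Fin n) (m : Fin 3) (i : Fin n) (k : Fin 3),
      Φ (fun l => (Pi.single j 1 : Fin n → ℝ) l • Pi.single m (1 : ℝ)) i k =
        if k = m then A i j else 0 :=
    ⟨fun i j => Φ (fun l => (Pi.single j 1 : Fin n → ℝ) l • Pi.single 0 (1 : ℝ)) i 0,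
      fun j m i k => key _ i m k⟩
  refine ⟨A, fun X i k => ?_⟩
  have hX : X = ∑ j, ∑ m, X j m •
      (fun l => (Pi.single j 1 : Fin n → ℝ) l • (Pi.single m (1 : ℝ) : Fin 3 → ℝ)) := by
    funext l m
    simp only [Finset.sum_apply, Pi.smul_apply, smul_eq_mul, Pi.single_apply]
    simp
  conv_lhs => rw [hX]
  simp only [map_sum, map_smul, Finset.sum_apply, Pi.smul_apply, hA, mulVec, dotProduct]
  simp [mul_comm]

/-- Preservation of `Ω` forces `Φ` to preserve every `ℝⁿ ⊗ a`. -/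
lemma cross_eq_zero_of_preserves {n : ℕ}
    (Φ : (Fin n → (Fin 3 → ℝ)) →ₗ[ℝ] (Fin n → (Fin 3 → ℝ)))
    (h : ∀ X Y : Fin n → (Fin 3 → ℝ),
        (∑ i, crossProduct (Φ X i) (Φ Y i)) = ∑ i, crossProduct (X i) (Y i))
    (u : Fin n → ℝ) (a : Fin 3 → ℝ) (i : Fin n) :
    crossProduct (Φ (fun l => u l • a) i) a = 0 := by
  have hs : ∀ (X : Fin n → Fin 3 → ℝ) (i : Fin n) (b : Fin 3 → ℝ),
      ∑ l, crossProduct (X l) ((Pi.single i b : Fin n → Fin 3 → ℝ) l) =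
        crossProduct (X i) b := by
    intro X i b
    rw [Finset.sum_eq_single i] <;> simp +contextual
  have hinj : Function.Injective Φ := by
    rw [← LinearMap.ker_eq_bot, LinearMap.ker_eq_bot']
    intro X hX
    funext j
    have hb : ∀ b, crossProduct (X j) b = 0 := by
      intro b
      rw [← hs, ← h, hX]
      simp
    have h0 := hb (Pi.single 0 1)
    have h1 := hb (Pi.single 1 1)
    simp [cross_apply] at h0 h1
    funext m
    fin_cases m <;> simp [h0, h1]
  have hsurj := LinearMap.injective_iff_surjective.mp hinj
  have hb : ∀ b, a ⬝ᵥ crossProduct (Φ (fun l => u l • a) i) b = 0 := by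
    intro b
    obtain ⟨Y, hY⟩ := hsurj (Pi.single i b)
    rw [← hs, ← hY, h, dotProduct_sum]
    simp
  have h0 := hb (Pi.single 0 1)
  have h1 := hb (Pi.single 1 1)
  have h2 := hb (Pi.single 2 1)
  simp [cross_apply, dotProduct, Fin.sum_univ_three] at h0 h1 h2 ⊢
  refine ⟨?_, ?_, ?_⟩ <;> linarith

/-- Commutation with half-turns forces `Φ` to preserve every `ℝⁿ ⊗ a`. -/
lemma cross_eq_zero_of_commutes {n : ℕ}
    (Φ : (Fin n → (Fin 3 → ℝ)) →ₗ[ℝ] (Fin n → (Fin 3 → ℝ)))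
    (h : ∀ g : Matrix (Fin 3) (Fin 3) ℝ, gᵀ * g = 1 →
          ∀ X : Fin n → (Fin 3 → ℝ),
            Φ (fun i => g.mulVec (X i)) = fun i => g.mulVec (Φ X i))
    (u : Fin n → ℝ) (a : Fin 3 → ℝ) (i : Fin n) :
    crossProduct (Φ (fun l => u l • a) i) a = 0 := by
  by_cases ha : a = 0
  · simp [ha]
  have hd : a ⬝ᵥ a ≠ 0 := by simpa using ha
  set c : ℝ := 2 / (a ⬝ᵥ a) with hc
  have hca : c * (a ⬝ᵥ a) = 2 := by rw [hc]; field_simp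
  -- the half-turn about the line spanned by `a`
  let g : Matrix (Fin 3) (Fin 3) ℝ := c • vecMulVec a a - 1
  have hg : gᵀ * g = 1 := by
    have ht : gᵀ = g := by simp [g, transpose_vecMulVec]
    rw [ht]
    have hsq : (c • vecMulVec a a) * (c • vecMulVec a a) = (2 : ℝ) • (c • vecMulVec a a) := by
      rw [smul_mul_smul_comm, vecMulVec_mul_vecMulVec, vecMulVec_smul, smul_smul, smul_smul]
      congr 1
      linear_combination c * hca
    simp only [g, sub_mul, mul_sub, hsq, two_smul]
    simp
  have hmul : ∀ v, g *ᵥ v = (c * (a ⬝ᵥ v)) • a - v := by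
    intro v
    simp [g, sub_mulVec, smul_mulVec, vecMulVec_mulVec, smul_smul]
  have hfix : (fun l => g *ᵥ (u l • a)) = fun l => u l • a := by
    funext l
    rw [mulVec_smul, hmul, hca, two_smul, add_sub_cancel_right]
  have hv := congrFun (h g hg (fun l => u l • a)) i
  rw [hfix] at hv
  simp only [hmul] at hv
  generalize Φ (fun l => u l • a) i = v at *
  have h2 : (2 : ℝ) • v = (c * (a ⬝ᵥ v)) • a := by
    rw [two_smul]; exact eq_sub_iff_add_eq.mp hv
  have h3 : (2 : ℝ) • crossProduct v a = 0 := by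
    rw [← LinearMap.smul_apply, ← map_smul, h2]
    simp
  simpa using h3

theorem stmt0 (n : ℕ) (hn : 1 ≤ n)
    (Φ : ((Fin n → (Fin 3 → ℝ)) →ₗ[ℝ] (Fin n → (Fin 3 → ℝ)))) :
    (∀ X Y : Fin n → (Fin 3 → ℝ),
        (∑ i, crossProduct (Φ X i) (Φ Y i)) = ∑ i, crossProduct (X i) (Y i)) ↔
      ((∀ X : Fin n → (Fin 3 → ℝ), (∑ i, ∑ j, (Φ X i j) ^ 2) = ∑ i, ∑ j, (X i j) ^ 2) ∧
        (∀ g : Matrix (Fin 3) (Fin 3) ℝ, gᵀ * g = 1 →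
          ∀ X : Fin n → (Fin 3 → ℝ),
            Φ (fun i => g.mulVec (X i)) = fun i => g.mulVec (Φ X i))) := by
  constructor
  · intro h
    obtain ⟨A, hA⟩ := exists_matrix Φ (cross_eq_zero_of_preserves Φ h)
    have hP : ∀ u w : Fin n → ℝ, (A *ᵥ u) ⬝ᵥ (A *ᵥ w) = u ⬝ᵥ w := by
      intro u w
      -- the last coordinate of `Ω(u ⊗ e₀, w ⊗ e₁)` is `u ⬝ᵥ w`
      have := congrFun (h (fun i => ![u i, 0, 0]) (fun i => ![0, w i, 0])) 2
      have z : A *ᵥ (fun _ => (0 : ℝ)) = 0 := mulVec_zero A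
      simpa [cross_apply, hA, Finset.sum_apply, z, dotProduct] using this
    refine ⟨fun X => ?_, fun g _ X => ?_⟩
    · rw [Finset.sum_comm, Finset.sum_comm (f := fun i j => (X i j) ^ 2)]
      refine Finset.sum_congr rfl fun k _ => ?_
      simpa [dotProduct, hA, sq] using hP (fun j => X j k) (fun j => X j k)
    · funext i k
      simp only [hA, mulVec, dotProduct, Finset.mul_sum]
      rw [Finset.sum_comm]
      refine Finset.sum_congr rfl fun _ _ => Finset.sum_congr rfl fun _ _ => ?_
      ring
  · rintro ⟨hiso, hcomm⟩
    obtain ⟨A, hA⟩ := exists_matrix Φ (cross_eq_zero_of_commutes Φ hcomm)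
    have hQ : ∀ u : Fin n → ℝ, (A *ᵥ u) ⬝ᵥ (A *ᵥ u) = u ⬝ᵥ u := by
      intro u
      have := hiso (fun i => ![u i, 0, 0])
      have z : A *ᵥ (fun _ => (0 : ℝ)) = 0 := mulVec_zero A
      simpa [hA, Fin.sum_univ_three, z, dotProduct, sq] using this
    have hP : ∀ u w : Fin n → ℝ, (A *ᵥ u) ⬝ᵥ (A *ᵥ w) = u ⬝ᵥ w := by
      intro u w
      have h1 := hQ (u + w)
      simp only [mulVec_add, add_dotProduct, dotProduct_add, hQ] at h1
      rw [dotProduct_comm (A *ᵥ w), dotProduct_comm w u] at h1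
      linarith
    intro X Y
    have hc : ∀ k m, ∑ i, Φ X i k * Φ Y i m = ∑ i, X i k * Y i m := by
      intro k m
      simpa [dotProduct, hA] using hP (fun j => X j k) (fun j => Y j m)
    funext m
    fin_cases m <;> simp [cross_apply, Finset.sum_apply, Finset.sum_sub_distrib, hc]
end

section
/- Let n ≥ 2 and m₁,…,mₙ > 0. For i ≠ j define the basic Jacobi transformation ρ_{ij} on pairs ((a₁,…,aₙ),(m₁,…,mₙ)) of positions aᵢ ∈ ℝ³ and masses: it leaves (a_k, m_k) unchanged for k ≠ i,j and replaces (aᵢ, mᵢ) by (aᵢ − a_j, mᵢm_j/(mᵢ+m_j)) and (a_j, m_j) by ((mᵢaᵢ + m_ja_j)/(mᵢ+m_j), mᵢ+m_j). Define ρ₀ by (aᵢ, mᵢ) ↦ (√mᵢ · aᵢ, 1) for every i. With m^{(k)} = m_{k+1}+⋯+mₙ, m^{(0)} = Σᵢ mᵢ and ζ_k = √(m_k m^{(k−1)}/m^{(k)}): for every (a₁,…,aₙ) ∈ (ℝ³)ⁿ with Σᵢ mᵢaᵢ = 0, the composition ρ₀ ∘ ρ_{1n} ∘ ρ_{2n}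 ∘ ⋯ ∘ ρ_{n−1,n} (applying ρ_{n−1,n} first) sends ((a₁,…,aₙ),(m₁,…,mₙ)) to ((x₁,…,x_{n−1},0),(1,…,1)), where x_k = ζ_k( a_k + (1/m^{(k−1)}) Σ_{i=1}^{k−1} mᵢ aᵢ ) for 1 ≤ k ≤ n−1. -/
/-!
Applying `ρ_{n−1,n}, …, ρ_{k+1,n}` successively merges the last bodies: body `n` then carries the
total mass `m^{(k)}` of the bodies `k+1, …, n` and sits at their center of mass `c_k`
(`rho_tailState`, `foldr_rho`). The next step `ρ_{k,n}` leaves at index `k` the vector `a_k - c_k`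
with mass `m_k m^{(k)} / m^{(k−1)}`. For a centered configuration,
`m^{(k)} c_k = -∑_{i ≤ k} mᵢ aᵢ`, whence
`a_k - c_k = (m^{(k−1)} / m^{(k)}) (a_k + (1 / m^{(k−1)}) ∑_{i < k} mᵢ aᵢ)`,
and multiplying by the square root of the mass turns the scalar into `ζ_k` (`sqrt_smul_sub_center`).
Body `n` ends at the total center of mass, which is `0`.
Indices in the code start at `0`, so `tailSum m k` is `m^{(k)}` in the usual notation.
-/

open Matrix

/-- The sum of `f` over the indices (counted from `0`) that are at least `k`. -/
def tailSum {n : ℕ} {E : Type*} [AddCommMonoid E] (f : Fin n → E) (k : ℕ) : E :=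
  ∑ i ∈ Finset.univ.filter (fun i : Fin n => k ≤ (i : ℕ)), f i

/-- The center of mass of the bodies with index at least `k`. -/
noncomputable def tailCenter {n : ℕ} (m : Fin n → ℝ) (a : Fin n → Fin 3 → ℝ) (k : ℕ) :
    Fin 3 → ℝ :=
  (tailSum m k)⁻¹ • tailSum (fun i => m i • a i) k

/-- The basic Jacobi transformation `ρ_{ij}`. -/
noncomputable def rhoStep {n : ℕ} (i j : Fin n) (p : (Fin n → Fin 3 → ℝ) × (Fin n → ℝ)) :
    (Fin n → Fin 3 → ℝ) × (Fin n → ℝ) :=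
  (fun k => if k = i then p.1 i - p.1 j
    else if k = j then (p.2 i + p.2 j)⁻¹ • (p.2 i • p.1 i + p.2 j • p.1 j)
    else p.1 k,
   fun k => if k = i then p.2 i * p.2 j / (p.2 i + p.2 j)
    else if k = j then p.2 i + p.2 j
    else p.2 k)

/-- The configuration reached once the bodies with index at least `j` have been merged into the
last body: indices below `j` are untouched, and the indices `k` with `j ≤ k < n - 1` hold the
positions relative to the center of mass of the bodies after `k`. -/
noncomputable def tailState {n : ℕ} (m : Fin n → ℝ) (a : Fin n → Fin 3 → ℝ) (j : ℕ) :
    (Fin n → Fin 3 → ℝ) × (Fin n → ℝ) :=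
  (fun k => if (k : ℕ) = n - 1 then tailCenter m a j
    else if (k : ℕ) < j then a k else a k - tailCenter m a (k + 1),
   fun k => if (k : ℕ) = n - 1 then tailSum m j
    else if (k : ℕ) < j then m k else m k * tailSum m (k + 1) / tailSum m k)

lemma tailSum_succ {n : ℕ} {E : Type*} [AddCommMonoid E] (f : Fin n → E) (k : Fin n) :
    tailSum f k = f k + tailSum f (k + 1) := by
  unfold tailSum
  have h : Finset.univ.filter (fun i : Fin n => (k : ℕ) ≤ (i : ℕ)) =
      insert k (Finset.univ.filter (fun i : Fin n => (k : ℕ) + 1 ≤ (i : ℕ))) := by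
    ext i
    simp only [Finset.mem_filter, Finset.mem_univ, true_and, Finset.mem_insert, Fin.ext_iff]
    omega
  rw [h, Finset.sum_insert (by simp)]

lemma tailSum_last {n : ℕ} {E : Type*} [AddCommMonoid E] (f : Fin n → E) (k : Fin n)
    (hk : (k : ℕ) = n - 1) : tailSum f (n - 1) = f k := by
  rw [← hk, tailSum_succ]
  have : tailSum f ((k : ℕ) + 1) = 0 := by
    refine Finset.sum_eq_zero fun i hi => ?_
    have := (Finset.mem_filter.mp hi).2
    omega
  rw [this, add_zero]

lemma tailSum_pos {n : ℕ} {m : Fin n → ℝ} (hm : ∀ i, 0 < m i) {k : ℕ} (hk : k < n) :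
    0 < tailSum m k :=
  Finset.sum_pos (fun i _ => hm i) ⟨⟨k, hk⟩, by simp⟩

lemma sum_lt_add_tailSum {n : ℕ} {E : Type*} [AddCommMonoid E] (f : Fin n → E) (k : ℕ) :
    ∑ i ∈ Finset.univ.filter (fun i : Fin n => (i : ℕ) < k), f i + tailSum f k = ∑ i, f i := by
  unfold tailSum
  simpa only [not_lt] using
    Finset.sum_filter_add_sum_filter_not Finset.univ (fun i : Fin n => (i : ℕ) < k) f

/-- One step of the iteration: merging body `j` into the last body. -/
lemma rho_tailState {n : ℕ} {m : Fin n → ℝ} (hm : ∀ i, 0 < m i) (a : Fin n → Fin 3 → ℝ)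
    (j l : Fin n) (hl : (l : ℕ) = n - 1) (hj : (j : ℕ) < n - 1) :
    rhoStep j l (tailState m a (j + 1)) = tailState m a j := by
  have hpos := tailSum_pos hm (k := (j : ℕ) + 1) (by omega)
  have hM := tailSum_succ m j
  have hS := tailSum_succ (fun i => m i • a i) j
  have hjn : (j : ℕ) ≠ n - 1 := hj.ne
  simp only [rhoStep, tailState, hl, hjn, if_true, if_false, Nat.lt_succ_self, ← hM]
  refine Prod.ext (funext fun k => ?_) (funext fun k => ?_)
  · by_cases hkj : k = j
    · subst hkj
      simp [hjn]
    by_cases hkl : k = l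
    · subst hkl
      simp only [hkj, hl, if_true, if_false, tailCenter]
      rw [smul_smul (tailSum m _), mul_inv_cancel₀ hpos.ne', one_smul, hS]
    · have h1 : (k : ℕ) ≠ n - 1 := fun h => hkl (Fin.ext (h.trans hl.symm))
      have h2 : (k : ℕ) ≠ j := fun h => hkj (Fin.ext h)
      have h3 : (k : ℕ) < j + 1 ↔ (k : ℕ) < j := by omega
      simp only [hkj, hkl, h1, if_false, h3]
  · by_cases hkj : k = j
    · subst hkj
      simp [hjn]
    by_cases hkl : k = l
    · subst hkl
      simp [hkj, hl]
    · have h1 : (k : ℕ) ≠ n - 1 := fun h => hkl (Fin.ext (h.trans hl.symm))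
      have h2 : (k : ℕ) ≠ j := fun h => hkj (Fin.ext h)
      have h3 : (k : ℕ) < j + 1 ↔ (k : ℕ) < j := by omega
      simp only [hkj, hkl, h1, if_false, h3]

lemma tailState_last {n : ℕ} (hn : 2 ≤ n) {m : Fin n → ℝ} (hm : ∀ i, 0 < m i)
    (a : Fin n → Fin 3 → ℝ) : tailState m a (n - 1) = (a, m) := by
  refine Prod.ext (funext fun k => ?_) (funext fun k => ?_)
  · by_cases hk : (k : ℕ) = n - 1
    · simp only [tailState, hk, if_true, tailCenter, tailSum_last _ k hk]
      rw [smul_smul, inv_mul_cancel₀ (hm k).ne', one_smul]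
    · have : (k : ℕ) < n - 1 := by omega
      simp [tailState, hk, this]
  · by_cases hk : (k : ℕ) = n - 1
    · simp only [tailState, hk, if_true, tailSum_last _ k hk]
    · have : (k : ℕ) < n - 1 := by omega
      simp [tailState, hk, this]

/-- The composition of the steps with index at least `j`, by downward induction on `j`. -/
lemma foldr_rho {n : ℕ} (hn : 2 ≤ n) {m : Fin n → ℝ} (hm : ∀ i, 0 < m i)
    (a : Fin n → Fin 3 → ℝ) (j : ℕ) (hj : j ≤ n - 1) :
    ((List.finRange (n - 1)).drop j).foldr
      (fun i p => rhoStep (Fin.castLE (by omega) i) ⟨n - 1, by omega⟩ p) (a, m) =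
      tailState m a j := by
  induction hj using Nat.decreasingInduction with
  | self =>
    rw [tailState_last hn hm a, List.drop_eq_nil_of_le (by simp), List.foldr_nil]
  | of_succ j hj ih =>
    rw [List.drop_eq_getElem_cons (by simpa using hj), List.foldr_cons, ih]
    simpa using rho_tailState hm a ⟨j, by omega⟩ ⟨n - 1, by omega⟩ rfl hj

/-- Centering turns the mass-weighted relative position of body `k` into the `k`-th Jacobi
vector. -/
lemma sqrt_smul_sub_center {n : ℕ} {m : Fin n → ℝ} (hm : ∀ i, 0 < m i)
    (a : Fin n → Fin 3 → ℝ) (hc : ∑ i, m i • a i = 0) (k : Fin n) (hk : (k : ℕ) < n - 1) :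
    Real.sqrt (m k * tailSum m (k + 1) / tailSum m k) • (a k - tailCenter m a (k + 1)) =
      Real.sqrt (m k * tailSum m k / tailSum m (k + 1)) •
        (a k + (tailSum m k)⁻¹ •
          ∑ i ∈ Finset.univ.filter (fun i : Fin n => (i : ℕ) < (k : ℕ)), m i • a i) := by
  have hq := tailSum_pos hm (k := (k : ℕ) + 1) (by omega)
  have hp := tailSum_pos hm (k := (k : ℕ)) (by omega)
  have hM := tailSum_succ m k
  have hS := sum_lt_add_tailSum (fun i => m i • a i) k
  rw [tailSum_succ, hc] at hS
  unfold tailCenter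
  set q := tailSum m ((k : ℕ) + 1)
  set p := tailSum m (k : ℕ)
  set T := tailSum (fun i => m i • a i) ((k : ℕ) + 1)
  set S := ∑ i ∈ Finset.univ.filter (fun i : Fin n => (i : ℕ) < (k : ℕ)), m i • a i
  have hT : T = -(S + m k • a k) := by
    rw [eq_neg_iff_add_eq_zero, ← hS]; abel
  have hvec : a k - q⁻¹ • T = (p / q) • (a k + p⁻¹ • S) := by
    rw [hT, hM]
    rw [hM] at hp
    ext t
    simp only [Pi.sub_apply, Pi.add_apply, Pi.neg_apply, Pi.smul_apply, smul_eq_mul]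
    field_simp
    ring
  have hsqrt : Real.sqrt (m k * q / p) * (p / q) = Real.sqrt (m k * p / q) := by
    have h : m k * p / q = m k * q / p * (p / q) ^ 2 := by field_simp
    have h0 : 0 ≤ m k * q / p := by have := hm k; positivity
    rw [h, Real.sqrt_mul h0, Real.sqrt_sq (by positivity)]
  rw [hvec, smul_smul, hsqrt]

/-- The composition `ρ₀ ∘ ρ_{1n} ∘ ρ_{2n} ∘ ⋯ ∘ ρ_{n−1,n}` of basic Jacobi
transformations (applying `ρ_{n−1,n}` first) sends a centered configuration with masses
`(m₁,…,mₙ)` to the standard Jacobi vectors `(x₁,…,x_{n−1},0)` with all masses `1`. -/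
theorem stmt2 (n : ℕ) (hn : 2 ≤ n) (m : Fin n → ℝ) (hm : ∀ i, 0 < m i)
    (a : Fin n → Fin 3 → ℝ) (hc : ∑ i, m i • a i = 0) :
    let rho : Fin n → Fin n →
        ((Fin n → Fin 3 → ℝ) × (Fin n → ℝ)) → ((Fin n → Fin 3 → ℝ) × (Fin n → ℝ)) :=
      fun i j p =>
        (fun k => if k = i then p.1 i - p.1 j
          else if k = j then (p.2 i + p.2 j)⁻¹ • (p.2 i • p.1 i + p.2 j • p.1 j)
          else p.1 k,
         fun k => if k = i then p.2 i * p.2 j / (p.2 i + p.2 j)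
          else if k = j then p.2 i + p.2 j
          else p.2 k)
    let rho0 : ((Fin n → Fin 3 → ℝ) × (Fin n → ℝ)) → ((Fin n → Fin 3 → ℝ) × (Fin n → ℝ)) :=
      fun p => (fun k => Real.sqrt (p.2 k) • p.1 k, fun _ => 1)
    let msum : ℕ → ℝ := fun k => ∑ i ∈ Finset.univ.filter (fun i : Fin n => k ≤ (i : ℕ)), m i
    let x : Fin (n - 1) → Fin 3 → ℝ := fun k =>
      Real.sqrt (m ⟨k, by have := k.isLt; omega⟩ * msum k / msum ((k : ℕ) + 1)) •
        (a ⟨k, by have := k.isLt; omega⟩ +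
          (msum k)⁻¹ • ∑ i ∈ Finset.univ.filter (fun i : Fin n => (i : ℕ) < (k : ℕ)), m i • a i)
    rho0 ((List.finRange (n - 1)).foldr
        (fun i p => rho (Fin.castLE (by omega) i) ⟨n - 1, by omega⟩ p) (a, m)) =
      ((fun k : Fin n => if h : (k : ℕ) < n - 1 then x ⟨k, h⟩ else 0), fun _ => 1) := by
  intro rho rho0 msum x
  have hfold := foldr_rho hn hm a 0 (Nat.zero_le _)
  rw [List.drop_zero] at hfold
  have hrho : rho = rhoStep := rfl
  rw [hrho, hfold]
  refine Prod.ext (funext fun k => ?_) rfl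
  by_cases hk : (k : ℕ) < n - 1
  · have h := sqrt_smul_sub_center hm a hc k hk
    simp only [rho0, tailState, hk, hk.ne, Nat.not_lt_zero, if_false, dif_pos]
    exact h
  · have hk' : (k : ℕ) = n - 1 := by omega
    have h0 : tailSum (fun i => m i • a i) 0 = 0 := by
      rw [← hc]
      simp [tailSum]
    simp [rho0, tailState, hk', tailCenter, h0]
end

section
/- Let m ≥ 1 and let Sym*(m) = {Y : Y is a real symmetric positive semidefinite m×m matrix with trace(Y) = 1}, equipped with the subspace topology from the Frobenius norm. Then Sym*(m) is homeomorphic to the closed Euclidean unit ball (disk) of dimension m(m+1)/2 − 1. -/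
/-!
Symmetric `m × m` matrices are identified with functions on `Sym2 (Fin m)`, a space of dimension
`m(m+1)/2`; the trace becomes a nonzero linear functional on it, whose kernel `W` has dimension
`m(m+1)/2 - 1`. Translating by the matrix `(1/m) I`, the set of positive semidefinite matrices of
trace one becomes a subset `psdSlice` of `W` that is

* closed and convex, being cut out by the linear inequalities `0 ≤ xᵀYx`;
* bounded, because the entries of a positive semidefinite matrix are at most its trace;
* a neighbourhood of `0`, because a symmetric matrix with entries at most `1/m²` in absolute value
  has its quadratic form bounded below by `-(1/m) |x|²`.

A compact convex set with nonempty interior in a Euclidean space is homeomorphic to the unit ball,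
by rescaling along rays (`exists_homeomorph_image_interior_closure_frontier_eq_unitBall`).
-/

open Matrix

namespace SymTraceOne

variable {m : ℕ}

/-- The symmetric matrix with prescribed entries at unordered pairs of indices. -/
def symMat (f : Sym2 (Fin m) → ℝ) : Matrix (Fin m) (Fin m) ℝ := Matrix.of fun i j => f s(i, j)

/-- The entries of the symmetric part of `Y`, as a function of unordered pairs of indices. -/
noncomputable def symVec (Y : Matrix (Fin m) (Fin m) ℝ) : Sym2 (Fin m) → ℝ :=
  Sym2.lift ⟨fun i j => (Y i j + Y j i) / 2, fun _ _ => congrArg (· / 2) (add_comm _ _)⟩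

@[simp] lemma symMat_apply (f : Sym2 (Fin m) → ℝ) (i j : Fin m) : symMat f i j = f s(i, j) := rfl

@[simp] lemma symVec_mk (Y : Matrix (Fin m) (Fin m) ℝ) (i j : Fin m) :
    symVec Y s(i, j) = (Y i j + Y j i) / 2 := rfl

lemma symMat_symVec {Y : Matrix (Fin m) (Fin m) ℝ} (hY : Y.IsHermitian) :
    symMat (symVec Y) = Y := by
  ext i j
  have h : Y j i = Y i j := by simpa using hY.apply i j
  simp [h]

lemma symVec_symMat (f : Sym2 (Fin m) → ℝ) : symVec (symMat f) = f := by
  ext z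
  induction z with
  | _ i j => simp [Sym2.eq_swap (a := j) (b := i)]

lemma continuous_symMat : Continuous (symMat (m := m)) :=
  continuous_matrix fun i j => continuous_apply s(i, j)

lemma continuous_symVec : Continuous (symVec (m := m)) := by
  refine continuous_pi fun z => ?_
  induction z with
  | _ i j =>
    simp only [symVec_mk]
    exact ((continuous_id.matrix_elem i j).add (continuous_id.matrix_elem j i)).div_const 2

/-- The trace, as a linear functional of the entries at unordered pairs. -/
def tr (m : ℕ) : (Sym2 (Fin m) → ℝ) →ₗ[ℝ] ℝ := ∑ i : Fin m, LinearMap.proj s(i, i)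

lemma tr_apply (f : Sym2 (Fin m) → ℝ) : tr m f = ∑ i, f s(i, i) := by
  simp [tr]

lemma tr_eq (f : Sym2 (Fin m) → ℝ) : tr m f = (symMat f).trace := by
  simp [tr_apply, Matrix.trace]

lemma tr_symVec (Y : Matrix (Fin m) (Fin m) ℝ) : tr m (symVec Y) = Y.trace := by
  simp [tr_apply, Matrix.trace]

/-- The entries of the scalar matrix of trace one. -/
noncomputable def centre (m : ℕ) : Sym2 (Fin m) → ℝ :=
  symVec ((1 / (m : ℝ)) • (1 : Matrix (Fin m) (Fin m) ℝ))

lemma centre_mk (i j : Fin m) : centre m s(i, j) = if i = j then 1 / (m : ℝ) else 0 := by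
  by_cases h : i = j
  · subst h; simp [centre]
  · simp [centre, h, Ne.symm h]

lemma tr_centre (hm : 1 ≤ m) : tr m (centre m) = 1 := by
  have : (m : ℝ) ≠ 0 := by positivity
  simp [tr_apply, centre_mk, this]

lemma finrank_ker_tr (hm : 1 ≤ m) :
    Module.finrank ℝ (LinearMap.ker (tr m)) = m * (m + 1) / 2 - 1 := by
  have hs : Function.Surjective (tr m) := fun a => ⟨a • centre m, by simp [tr_centre hm]⟩
  have h := (tr m).finrank_range_add_finrank_ker
  rw [LinearMap.range_eq_top.2 hs, finrank_top, Module.finrank_self, Module.finrank_fintype_fun_eq_card,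
    Sym2.card, Fintype.card_fin, Nat.choose_two_right, Nat.add_sub_cancel, mul_comm] at h
  omega

/-- The quadratic form of a symmetric matrix, in terms of its entries at unordered pairs. -/
def quad (f : Sym2 (Fin m) → ℝ) (x : Fin m → ℝ) : ℝ := ∑ i, ∑ j, f s(i, j) * (x i * x j)

lemma quad_add (f g : Sym2 (Fin m) → ℝ) (x : Fin m → ℝ) :
    quad (f + g) x = quad f x + quad g x := by
  simp [quad, add_mul, Finset.sum_add_distrib]

lemma quad_smul (a : ℝ) (f : Sym2 (Fin m) → ℝ) (x : Fin m → ℝ) :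
    quad (a • f) x = a * quad f x := by
  simp [quad, Finset.mul_sum, mul_assoc]

lemma continuous_quad (x : Fin m → ℝ) : Continuous fun f : Sym2 (Fin m) → ℝ => quad f x := by
  unfold quad
  fun_prop

lemma posSemidef_symMat_iff (f : Sym2 (Fin m) → ℝ) :
    (symMat f).PosSemidef ↔ ∀ x, 0 ≤ quad f x := by
  rw [Matrix.posSemidef_iff_dotProduct_mulVec]
  have hH : (symMat f).IsHermitian := by
    ext i j
    simp [Sym2.eq_swap (a := j) (b := i)]
  have hq : ∀ x, star x ⬝ᵥ (symMat f *ᵥ x) = quad f x := by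
    intro x
    simp only [dotProduct, Matrix.mulVec, quad, Finset.mul_sum, symMat_apply]
    refine Finset.sum_congr rfl fun i _ => Finset.sum_congr rfl fun j _ => ?_
    simp only [Pi.star_apply, star_trivial]
    ring
  simp only [hH, hq, true_and]

lemma quad_centre (x : Fin m → ℝ) : quad (centre m) x = 1 / m * ∑ i, x i ^ 2 := by
  simp [quad, centre_mk, Finset.mul_sum, sq]

/-- Bounding `|x i * x j|` by `(x i ^ 2 + x j ^ 2) / 2` controls the quadratic form by the entries. -/
lemma quad_lower {f : Sym2 (Fin m) → ℝ} {ε : ℝ} (hf : ∀ z, |f z| ≤ ε) (x : Fin m → ℝ) :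
    -(ε * m * ∑ i, x i ^ 2) ≤ quad f x := by
  have h : ∑ i : Fin m, ∑ j : Fin m, -(ε * ((x i ^ 2 + x j ^ 2) / 2)) ≤ quad f x := by
    refine Finset.sum_le_sum fun i _ => Finset.sum_le_sum fun j _ => ?_
    have h1 : |f s(i, j) * (x i * x j)| ≤ ε * ((x i ^ 2 + x j ^ 2) / 2) := by
      rw [abs_mul]
      refine mul_le_mul (hf _) ?_ (abs_nonneg _) ((abs_nonneg _).trans (hf s(i, j)))
      rw [abs_le]
      constructor <;> nlinarith [sq_nonneg (x i + x j), sq_nonneg (x i - x j)]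
    exact (abs_le.1 h1).1
  refine le_trans (le_of_eq ?_) h
  simp only [Finset.sum_neg_distrib, ← Finset.mul_sum, ← Finset.sum_div, Finset.sum_add_distrib,
    Finset.sum_const, Finset.card_univ, Fintype.card_fin, nsmul_eq_mul]
  ring

/-- A vector supported on at most two coordinates sees the corresponding `2 × 2` block. -/
lemma quad_two (f : Sym2 (Fin m) → ℝ) (i j : Fin m) (a b : ℝ) :
    quad f (Pi.single i a + Pi.single j b) =
      f s(i, i) * a ^ 2 + 2 * (f s(i, j) * (a * b)) + f s(j, j) * b ^ 2 := by
  simp only [quad, Pi.add_apply, Pi.single_apply, mul_add, add_mul, Finset.sum_add_distrib,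
    ite_mul, mul_ite, zero_mul, mul_zero, Finset.sum_ite_eq', Finset.mem_univ,
    if_true]
  rw [Sym2.eq_swap (a := j) (b := i)]
  ring

/-- The entries of a positive semidefinite matrix are bounded by its trace. -/
lemma abs_le_one {f : Sym2 (Fin m) → ℝ} (hf : ∀ x, 0 ≤ quad f x) (ht : tr m f = 1)
    (z : Sym2 (Fin m)) : |f z| ≤ 1 := by
  have h0 : ∀ i, 0 ≤ f s(i, i) := fun i => by
    have := hf (Pi.single i 1 + Pi.single i 0)
    rw [quad_two] at this
    linarith
  have h1 : ∀ i, f s(i, i) ≤ 1 := fun i => by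
    rw [← ht, tr_apply]
    exact Finset.single_le_sum (f := fun i => f s(i, i)) (fun i _ => h0 i) (Finset.mem_univ i)
  induction z with
  | _ i j =>
    have hp := hf (Pi.single i 1 + Pi.single j 1)
    have hn := hf (Pi.single i 1 + Pi.single j (-1))
    rw [quad_two] at hp hn
    have := h1 i
    have := h1 j
    rw [abs_le]
    constructor <;> linarith

/-- The positive semidefinite matrices of trace one, translated by `centre m` into the space of
trace-zero symmetric matrices. -/
def psdSlice (m : ℕ) : Set (LinearMap.ker (tr m)) :=
  {w | ∀ x, 0 ≤ quad ((w : Sym2 (Fin m) → ℝ) + centre m) x}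

lemma isClosed_psdSlice : IsClosed (psdSlice m) := by
  simp only [psdSlice, Set.ofPred_forall]
  refine isClosed_iInter fun x => isClosed_le continuous_const ?_
  exact (continuous_quad x).comp (continuous_subtype_val.add continuous_const)

lemma convex_psdSlice : Convex ℝ (psdSlice m) := by
  intro v hv w hw a b ha hb hab x
  have h1 := mul_nonneg ha (hv x)
  have h2 := mul_nonneg hb (hw x)
  simp only [Submodule.coe_add, Submodule.coe_smul, quad_add, quad_smul] at h1 h2 ⊢
  have : quad (centre m) x = a * quad (centre m) x + b * quad (centre m) x := by
    rw [← add_mul, hab, one_mul]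
  linarith

lemma isBounded_psdSlice (hm : 1 ≤ m) : Bornology.IsBounded (psdSlice m) := by
  refine (Metric.isBounded_closedBall (x := (0 : LinearMap.ker (tr m)))
    (r := 1 + ‖centre m‖)).subset fun w hw => ?_
  have ht : tr m ((w : Sym2 (Fin m) → ℝ) + centre m) = 1 := by
    rw [map_add, LinearMap.mem_ker.1 w.2, tr_centre hm, zero_add]
  have h : ‖(w : Sym2 (Fin m) → ℝ) + centre m‖ ≤ 1 :=
    (pi_norm_le_iff_of_nonneg zero_le_one).2 fun z => abs_le_one hw ht z
  have h2 := norm_sub_le ((w : Sym2 (Fin m) → ℝ) + centre m) (centre m)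
  rw [add_sub_cancel_right] at h2
  rw [mem_closedBall_zero_iff, Submodule.coe_norm]
  linarith

lemma psdSlice_mem_nhds (hm : 1 ≤ m) : psdSlice m ∈ nhds 0 := by
  have hm0 : (0 : ℝ) < m := by exact_mod_cast hm
  have hpos : (0 : ℝ) < 1 / (m : ℝ) ^ 2 := by positivity
  filter_upwards [Metric.closedBall_mem_nhds (0 : LinearMap.ker (tr m)) hpos] with w hw x
  rw [mem_closedBall_zero_iff, Submodule.coe_norm] at hw
  have h := quad_lower (fun z => (norm_le_pi_norm (w : Sym2 (Fin m) → ℝ) z).trans hw) x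
  have he : 1 / (m : ℝ) ^ 2 * m = 1 / m := by field_simp
  rw [he] at h
  rw [quad_add, quad_centre]
  linarith

/-- Translation by `centre m` identifies the matrices in question with `psdSlice m`. -/
noncomputable def homeoSlice (hm : 1 ≤ m) :
    {Y : Matrix (Fin m) (Fin m) ℝ | Y.PosSemidef ∧ Y.trace = 1} ≃ₜ psdSlice m where
  toFun Y := ⟨⟨symVec Y.1 - centre m, by
      rw [LinearMap.mem_ker, map_sub, tr_symVec, tr_centre hm, Y.2.2, sub_self]⟩, by
      simp only [psdSlice, Set.mem_ofPred_eq, sub_add_cancel]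
      rw [← posSemidef_symMat_iff, symMat_symVec Y.2.1.isHermitian]
      exact Y.2.1⟩
  invFun w := ⟨symMat ((w.1 : Sym2 (Fin m) → ℝ) + centre m),
    (posSemidef_symMat_iff _).2 w.2, by
      rw [← tr_eq, map_add, LinearMap.mem_ker.1 w.1.2, tr_centre hm, zero_add]⟩
  left_inv Y := by
    apply Subtype.ext
    simp only [sub_add_cancel]
    exact symMat_symVec Y.2.1.isHermitian
  right_inv w := by
    apply Subtype.ext
    apply Subtype.ext
    simp only [symVec_symMat, add_sub_cancel_right]
  continuous_toFun := by
    refine Continuous.subtype_mk (Continuous.subtype_mk ?_ _) _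
    exact (continuous_symVec.comp continuous_subtype_val).sub continuous_const
  continuous_invFun := by
    refine Continuous.subtype_mk ?_ _
    exact continuous_symMat.comp
      ((continuous_subtype_val.comp continuous_subtype_val).add continuous_const)

end SymTraceOne

/-- The set `Sym*(m)` of real symmetric positive semidefinite `m×m` matrices
of trace one is homeomorphic to the closed unit disk of dimension `m(m+1)/2 − 1`. -/
theorem stmt7 (m : ℕ) (hm : 1 ≤ m) :
    Nonempty (({Y : Matrix (Fin m) (Fin m) ℝ | Y.PosSemidef ∧ Y.trace = 1}) ≃ₜ
      (Metric.closedBall (0 : EuclideanSpace ℝ (Fin (m * (m + 1) / 2 - 1))) 1)) := by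
  -- The sup norm on the kernel of the trace is not Euclidean, so the slice is moved to the
  -- Euclidean space of the same dimension before it is rescaled.
  let L : LinearMap.ker (SymTraceOne.tr m) ≃L[ℝ]
      EuclideanSpace ℝ (Fin (m * (m + 1) / 2 - 1)) :=
    ContinuousLinearEquiv.ofFinrankEq (by
      rw [SymTraceOne.finrank_ker_tr hm, finrank_euclideanSpace_fin])
  let K := SymTraceOne.psdSlice m
  have hK : IsCompact K :=
    Metric.isCompact_of_isClosed_isBounded SymTraceOne.isClosed_psdSlice
      (SymTraceOne.isBounded_psdSlice hm)
  have hLK : IsCompact (L '' K) := hK.image L.continuous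
  have hconv : Convex ℝ (L '' K) :=
    SymTraceOne.convex_psdSlice.linear_image L.toLinearEquiv.toLinearMap
  have hint : (interior (L '' K)).Nonempty := by
    refine ⟨L 0, mem_interior_iff_mem_nhds.2 ?_⟩
    exact L.toHomeomorph.isOpenMap.image_mem_nhds (SymTraceOne.psdSlice_mem_nhds hm)
  obtain ⟨h, -, hcl, -⟩ :=
    exists_homeomorph_image_interior_closure_frontier_eq_unitBall hconv hint hLK.isBounded
  rw [hLK.isClosed.closure_eq] at hcl
  exact ⟨(SymTraceOne.homeoSlice hm).trans <| (L.toHomeomorph.image K).trans <|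
    (h.image (L '' K)).trans <| Homeomorph.setCongr hcl⟩
end

section
/- Let m ≥ 2. The set {Y : Y real symmetric positive semidefinite m×m matrix, trace(Y) = 1, rank(Y) ≤ m−1}, with the subspace topology from the Frobenius norm, is homeomorphic to the standard sphere S^{m(m+1)/2 − 2} = {x ∈ ℝ^{m(m+1)/2 − 1} : |x| = 1}. (This set is the boundary of the disk Sym*(m) of all positive semidefinite trace-one symmetric matrices.) -/
open Matrix

/-!
Translating by the centre `(1/m) • 1` turns the trace-one symmetric matrices into the linear space
of trace-zero symmetric matrices, of dimension `m(m+1)/2 - 1`; `exists_traceZeroParam` identifies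
the latter with Euclidean space. There the positive semidefinite matrices form a compact convex
set with `0` in its interior. Its interior consists exactly of the positive definite matrices:
positive definiteness is an open condition by compactness of the unit sphere
(`isOpen_setOf_pos_quadratic`), while if `Y v = 0` for some `v ≠ 0`, moving `Y` slightly further
away from the centre makes `vᵀ Y v` negative (`exists_not_posSemidef_of_not_posDef`). Hence its
frontier is the set of positive semidefinite matrices that are singular, i.e. of rank at most
`m - 1`, and the frontier of a bounded convex body is homeomorphic to the unit sphere by radial
rescaling.
-/

/-- The symmetric matrix with prescribed entries on unordered pairs of indices. -/
def symOfSym2 (m : ℕ) : (Sym2 (Fin m) → ℝ) →ₗ[ℝ] Matrix (Fin m) (Fin m) ℝ where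
  toFun f := Matrix.of fun i j => f s(i, j)
  map_add' _ _ := rfl
  map_smul' _ _ := rfl

lemma symOfSym2_apply (m : ℕ) (f : Sym2 (Fin m) → ℝ) (i j : Fin m) :
    symOfSym2 m f i j = f s(i, j) := rfl

lemma symOfSym2_injective (m : ℕ) : Function.Injective (symOfSym2 m) := by
  intro f g h
  funext p
  induction p using Sym2.ind with
  | _ i j => exact congrFun (congrFun h i) j

lemma exists_symOfSym2_eq {m : ℕ} {A : Matrix (Fin m) (Fin m) ℝ} (hA : A.IsHermitian) :
    ∃ f, symOfSym2 m f = A := by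
  refine ⟨Sym2.lift ⟨fun i j => A i j, fun i j => ?_⟩, ?_⟩
  · simpa using hA.apply j i
  · ext i j
    simp [symOfSym2_apply]

lemma isHermitian_symOfSym2 {m : ℕ} (f : Sym2 (Fin m) → ℝ) : (symOfSym2 m f).IsHermitian := by
  ext i j
  simp [symOfSym2_apply, Sym2.eq_swap]

/-- The trace-zero symmetric matrices form a space of dimension `m(m+1)/2 - 1`. -/
lemma exists_traceZeroParam (m : ℕ) (hm : 2 ≤ m) :
    ∃ f : EuclideanSpace ℝ (Fin (m * (m + 1) / 2 - 1)) →ₗ[ℝ] Matrix (Fin m) (Fin m) ℝ,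
      Function.Injective f ∧
      ∀ A, A ∈ Set.range f ↔ A.IsHermitian ∧ A.trace = 0 := by
  let τ : (Sym2 (Fin m) → ℝ) →ₗ[ℝ] ℝ := (Matrix.traceLinearMap (Fin m) ℝ ℝ) ∘ₗ symOfSym2 m
  have hτ : LinearMap.range τ = ⊤ := by
    rw [LinearMap.range_eq_top]
    apply LinearMap.surjective
    intro h
    obtain ⟨f, hf⟩ := exists_symOfSym2_eq
      (isHermitian_one : (1 : Matrix (Fin m) (Fin m) ℝ).IsHermitian)
    have : τ f = 0 := by rw [h]; rfl
    simp [τ, hf] at this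
    omega
  have hdim : Module.finrank ℝ (LinearMap.ker τ) = m * (m + 1) / 2 - 1 := by
    have h := τ.finrank_range_add_finrank_ker
    rw [hτ, finrank_top, Module.finrank_self, Module.finrank_fintype_fun_eq_card, Sym2.card,
      Fintype.card_fin, Nat.choose_two_right, Nat.add_sub_cancel, mul_comm] at h
    omega
  let e : EuclideanSpace ℝ (Fin (m * (m + 1) / 2 - 1)) ≃ₗ[ℝ] LinearMap.ker τ :=
    LinearEquiv.ofFinrankEq _ _ (by rw [hdim, finrank_euclideanSpace_fin])
  refine ⟨symOfSym2 m ∘ₗ (LinearMap.ker τ).subtype ∘ₗ e.toLinearMap, ?_, fun A => ⟨?_, ?_⟩⟩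
  · exact (symOfSym2_injective m).comp (Subtype.val_injective.comp e.injective)
  · rintro ⟨x, rfl⟩
    exact ⟨isHermitian_symOfSym2 _, (e x).2⟩
  · rintro ⟨hA, h0⟩
    obtain ⟨f, rfl⟩ := exists_symOfSym2_eq hA
    refine ⟨e.symm ⟨f, h0⟩, ?_⟩
    simp

/-- Positivity of the quadratic form is an open condition: it suffices to test it on the compact
unit sphere. -/
lemma isOpen_setOf_pos_quadratic (m : ℕ) :
    IsOpen {A : Matrix (Fin m) (Fin m) ℝ | ∀ v, v ≠ 0 → 0 < v ⬝ᵥ (A *ᵥ v)} := by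
  have hK : IsCompact (Metric.sphere (0 : Fin m → ℝ) 1) := isCompact_sphere 0 1
  have heq : {A : Matrix (Fin m) (Fin m) ℝ | ∀ v, v ≠ 0 → 0 < v ⬝ᵥ (A *ᵥ v)} =
      {A | ∀ v ∈ Metric.sphere (0 : Fin m → ℝ) 1, 0 < v ⬝ᵥ (A *ᵥ v)} := by
    ext A
    refine ⟨fun h v hv => h v (ne_zero_of_mem_unit_sphere ⟨v, hv⟩), fun h v hv => ?_⟩
    have h1 := h (‖v‖⁻¹ • v) (by simp [norm_smul, hv])
    have hn : 0 < ‖v‖ := norm_pos_iff.2 hv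
    rw [mulVec_smul, smul_dotProduct, dotProduct_smul, smul_eq_mul, smul_eq_mul,
      ← mul_assoc] at h1
    exact pos_of_mul_pos_right h1 (by positivity)
  rw [heq, isOpen_iff_mem_nhds]
  intro A hA
  refine hK.eventually_forall_of_forall_eventually fun v hv => ?_
  have hc : Continuous fun p : Matrix (Fin m) (Fin m) ℝ × (Fin m → ℝ) =>
      p.2 ⬝ᵥ (p.1 *ᵥ p.2) := by fun_prop
  exact hc.continuousAt.eventually (lt_mem_nhds (hA v hv))

lemma isClosed_setOf_posSemidef (m : ℕ) :
    IsClosed {A : Matrix (Fin m) (Fin m) ℝ | A.PosSemidef} := by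
  simp only [posSemidef_iff_dotProduct_mulVec, Set.ofPred_and, Set.ofPred_forall]
  refine IsClosed.inter (isClosed_eq (by fun_prop) continuous_id) (isClosed_iInter fun v => ?_)
  exact isClosed_le continuous_const (by fun_prop)

lemma convex_setOf_posSemidef (m : ℕ) :
    Convex ℝ {A : Matrix (Fin m) (Fin m) ℝ | A.PosSemidef} :=
  fun _ hA _ hB _ _ ha hb _ => (hA.smul ha).add (hB.smul hb)

/-- The diagonal entries lie in `[0, 1]`; the others are controlled by testing the quadratic form
on `e_i ± e_j`. -/
lemma abs_entry_le_one {m : ℕ} {A : Matrix (Fin m) (Fin m) ℝ} (hA : A.PosSemidef)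
    (ht : A.trace = 1) (i j : Fin m) : |A i j| ≤ 1 := by
  have hd : ∀ k, A k k ≤ 1 := fun k => by
    rw [← ht]
    exact Finset.single_le_sum (f := fun k => A k k) (fun l _ => hA.diag_nonneg) (Finset.mem_univ k)
  have hs : A j i = A i j := by simpa using hA.1.apply i j
  have h1 := hA.dotProduct_mulVec_nonneg (Pi.single i 1 + Pi.single j 1)
  have h2 := hA.dotProduct_mulVec_nonneg (Pi.single i 1 - Pi.single j 1)
  simp [mulVec_add, mulVec_sub, add_dotProduct, sub_dotProduct, Matrix.col_apply] at h1 h2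
  rw [abs_le]
  constructor <;> linarith [hd i, hd j]

lemma not_posDef_iff_rank_le {m : ℕ} (hm : 2 ≤ m) {A : Matrix (Fin m) (Fin m) ℝ}
    (hA : A.PosSemidef) : ¬ A.PosDef ↔ A.rank ≤ m - 1 := by
  rw [hA.posDef_iff_isUnit]
  constructor
  · intro h
    by_contra! hr
    have hle := A.rank_le_width
    apply h
    rw [← mulVec_surjective_iff_isUnit]
    have : LinearMap.range A.mulVecLin = ⊤ := by
      apply Submodule.eq_top_of_finrank_eq
      change A.rank = _
      simp
      omega
    exact LinearMap.range_eq_top.1 this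
  · intro h hu
    have := rank_of_isUnit A hu
    simp at this
    omega

/-- A positive semidefinite `A` that is not positive definite has a null vector `v`, on which
`t • A - s • 1` is negative. -/
lemma exists_not_posSemidef_of_not_posDef {m : ℕ} {A : Matrix (Fin m) (Fin m) ℝ}
    (hA : A.PosSemidef) (h : ¬ A.PosDef) (t : ℝ) {s : ℝ} (hs : 0 < s) :
    ¬ (t • A - s • (1 : Matrix (Fin m) (Fin m) ℝ)).PosSemidef := by
  intro hB
  rw [hA.posDef_iff_det_ne_zero, not_not, ← exists_mulVec_eq_zero_iff] at h
  obtain ⟨v, hv, hAv⟩ := h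
  have h1 := hB.dotProduct_mulVec_nonneg v
  rw [sub_mulVec, smul_mulVec, smul_mulVec, hAv, one_mulVec] at h1
  have h2 : 0 < v ⬝ᵥ v := by simpa using dotProduct_star_self_pos_iff.2 hv
  simp at h1
  nlinarith

/-- The set of real symmetric positive semidefinite `m×m` matrices of trace
one and rank at most `m−1` is homeomorphic to the sphere `S^{m(m+1)/2 − 2}`. -/
theorem stmt8 (m : ℕ) (hm : 2 ≤ m) :
    Nonempty (({Y : Matrix (Fin m) (Fin m) ℝ |
        Y.PosSemidef ∧ Y.trace = 1 ∧ Y.rank ≤ m - 1}) ≃ₜ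
      (Metric.sphere (0 : EuclideanSpace ℝ (Fin (m * (m + 1) / 2 - 1))) 1)) := by
  obtain ⟨f, hinj, hrange⟩ := exists_traceZeroParam m hm
  have hm0 : (0 : ℝ) < m := by exact_mod_cast (by omega : 0 < m)
  set c : ℝ := (m : ℝ)⁻¹ with hc
  have hcpos : 0 < c := by positivity
  let C : Matrix (Fin m) (Fin m) ℝ := c • 1
  have hCtr : C.trace = 1 := by simp [C, hc, hm0.ne']
  have hCherm : C.IsHermitian := (isHermitian_one (α := ℝ)).smul (IsSelfAdjoint.all c)
  let g : EuclideanSpace ℝ (Fin (m * (m + 1) / 2 - 1)) → Matrix (Fin m) (Fin m) ℝ :=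
    fun x => C + f x
  have hg : Topology.IsClosedEmbedding g :=
    (Homeomorph.addLeft C).isClosedEmbedding.comp
      (LinearMap.isClosedEmbedding_of_injective (LinearMap.ker_eq_bot.2 hinj))
  have hgherm : ∀ x, (g x).IsHermitian := fun x => hCherm.add ((hrange _).1 ⟨x, rfl⟩).1
  have hgtr : ∀ x, (g x).trace = 1 := fun x => by
    simp [g, hCtr, ((hrange _).1 ⟨x, rfl⟩).2]
  have hgsurj : ∀ Y : Matrix (Fin m) (Fin m) ℝ, Y.IsHermitian → Y.trace = 1 → ∃ x, g x = Y := by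
    intro Y hY ht
    obtain ⟨x, hx⟩ := (hrange (Y - C)).2 ⟨hY.sub hCherm, by simp [ht, hCtr]⟩
    exact ⟨x, by simp [g, hx]⟩
  let S : Set (EuclideanSpace ℝ (Fin (m * (m + 1) / 2 - 1))) := {x | (g x).PosSemidef}
  have hSclosed : IsClosed S := (isClosed_setOf_posSemidef m).preimage hg.continuous
  have hSconv : Convex ℝ S := by
    intro x hx y hy a b ha hb hab
    have h := convex_setOf_posSemidef m hx hy ha hb hab
    have heq : a • g x + b • g y = g (a • x + b • y) := by
      have hC : C = a • C + b • C := by rw [← add_smul, hab, one_smul]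
      simp only [g, map_add, map_smul]
      conv_rhs => rw [hC]
      module
    rwa [heq] at h
  have hSbdd : Bornology.IsBounded S := by
    have hK : IsCompact (Set.univ.pi fun _ : Fin m => Set.univ.pi fun _ : Fin m =>
        Set.Icc (-1 : ℝ) 1) :=
      isCompact_univ_pi fun _ => isCompact_univ_pi fun _ => isCompact_Icc
    refine (hg.isCompact_preimage hK).isBounded.subset fun x hx i _ j _ => ?_
    exact abs_le.1 (abs_entry_le_one hx (hgtr x) i j)
  have hSint : interior S = {x | (g x).PosDef} := by
    apply Set.Subset.antisymm
    · intro x hx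
      by_contra hnd
      have hxS : (g x).PosSemidef := interior_subset (s := S) hx
      -- an interior point can be pushed radially outwards without leaving `S`
      have hev : ∀ᶠ t : ℝ in nhds 1, t • x ∈ S := by
        have hcont : Continuous fun t : ℝ => t • x := by fun_prop
        refine hcont.continuousAt.eventually ?_
        simp only [one_smul]
        exact mem_interior_iff_mem_nhds.1 hx
      obtain ⟨t, htS, ht1⟩ :=
        ((hev.filter_mono nhdsWithin_le_nhds).and
          (self_mem_nhdsWithin : Set.Ioi (1 : ℝ) ∈ nhdsWithin 1 (Set.Ioi 1))).exists
      refine exists_not_posSemidef_of_not_posDef hxS hnd t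
        (mul_pos (sub_pos.2 ht1) hcpos) ?_
      have heq : t • g x - ((t - 1) * c) • (1 : Matrix (Fin m) (Fin m) ℝ) = g (t • x) := by
        simp only [g, C, map_smul]
        module
      rw [heq]
      exact htS
    · refine fun x hx => mem_interior.2
        ⟨_, fun y hy => ?_, (isOpen_setOf_pos_quadratic m).preimage hg.continuous, ?_⟩
      · refine PosSemidef.of_dotProduct_mulVec_nonneg (hgherm y) fun v => ?_
        rcases eq_or_ne v 0 with rfl | hv
        · simp
        · simpa using (hy v hv).le
      · intro v hv
        simpa using PosDef.dotProduct_mulVec_pos hx hv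
  have hne : (interior S).Nonempty := by
    refine ⟨0, ?_⟩
    rw [hSint]
    have h : C.PosDef := PosDef.one.smul hcpos
    simpa [g] using h
  obtain ⟨e, -, -, he⟩ :=
    exists_homeomorph_image_interior_closure_frontier_eq_unitBall hSconv hne hSbdd
  have himg : g '' frontier S =
      {Y | Y.PosSemidef ∧ Y.trace = 1 ∧ Y.rank ≤ m - 1} := by
    rw [hSclosed.frontier_eq, hSint]
    ext Y
    constructor
    · rintro ⟨x, ⟨hx, hnd⟩, rfl⟩
      exact ⟨hx, hgtr x, (not_posDef_iff_rank_le hm hx).1 hnd⟩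
    · rintro ⟨hY, ht, hr⟩
      obtain ⟨x, rfl⟩ := hgsurj Y hY.1 ht
      exact ⟨x, ⟨hY, (not_posDef_iff_rank_le hm hY).2 hr⟩, rfl⟩
  rw [← himg, ← he]
  exact ⟨(hg.isEmbedding.homeomorphImage (frontier S)).symm.trans (e.image (frontier S))⟩
end

section
/- Let m ≥ 1. Let Sym*(m) = {Y real symmetric positive semidefinite m×m, trace(Y) = 1} and let D⁰(m) = {Z real symmetric m×m, trace(Z) = 0, ‖Z‖ ≤ 1} be the closed unit ball (Frobenius norm) in the space of trace-zero symmetric matrices. Then there exists a homeomorphism ψ : Sym*(m) → D⁰(m) which is O(m)-equivariant for the conjugation actions: ψ(gYgᵀ) = g ψ(Y) gᵀ for every orthogonal m×m matrix g and every Y ∈ Sym*(m). -/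
/-!
Translating by the barycentre `m⁻¹ • 1` turns the trace-one positive semidefinite matrices into a
subset `spectra m` of the space `TracelessSymm m` of trace-zero symmetric matrices. It is closed and
convex, bounded because the entries of a positive semidefinite matrix are at most its trace
(`abs_entry_le`), and a neighbourhood of `0` because a symmetric matrix with small entries has a
quadratic form dominated by `m⁻¹ • 1` (`posSemidef_of_small`). The unit ball `frobBall m` has the
same four properties, so rescaling each ray by the ratio of the two Minkowski gauges is a
homeomorphism of the ambient space carrying one set onto the other. Both sets are invariant under
conjugation by orthogonal matrices, hence so are their gauges (`gauge_conjO`), and the rescaling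
map is therefore equivariant.
-/

open Matrix Topology

/-! ### The ambient space and the two convex bodies -/

/-- The space of symmetric `m × m` real matrices of trace zero. -/
def TracelessSymm (m : ℕ) : Submodule ℝ (Matrix (Fin m) (Fin m) ℝ) where
  carrier := {X | X.IsSymm ∧ X.trace = 0}
  add_mem' := fun {a b} ha hb => ⟨ha.1.add hb.1, by rw [trace_add, ha.2, hb.2, add_zero]⟩
  zero_mem' := ⟨isSymm_zero, trace_zero _ _⟩
  smul_mem' := fun c x hx => ⟨hx.1.smul c, by rw [trace_smul, hx.2, smul_zero]⟩

/-- The trace-one positive semidefinite matrices, translated by their barycentre `m⁻¹ • 1`. -/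
def spectra (m : ℕ) : Set (TracelessSymm m) :=
  {X | ((X : Matrix (Fin m) (Fin m) ℝ) + (m : ℝ)⁻¹ • 1).PosSemidef}

/-- The closed unit ball for the Frobenius norm. -/
def frobBall (m : ℕ) : Set (TracelessSymm m) :=
  {X | ((X : Matrix (Fin m) (Fin m) ℝ)ᵀ * (X : Matrix (Fin m) (Fin m) ℝ)).trace ≤ 1}

/-! ### Entry estimates for symmetric matrices -/

lemma trace_transpose_mul_eq {m : ℕ} (X : Matrix (Fin m) (Fin m) ℝ) :
    (Xᵀ * X).trace = ∑ j, ∑ i, X i j ^ 2 := by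
  simp [trace, mul_apply, sq]

/-- The entries of a trace-one positive semidefinite matrix have absolute value at most `1`, since the quadratic form
is nonnegative at `eᵢ ± eⱼ`. -/
lemma abs_entry_le {m : ℕ} {Y : Matrix (Fin m) (Fin m) ℝ} (hY : Y.PosSemidef) (h1 : Y.trace = 1)
    (i j : Fin m) : |Y i j| ≤ 1 := by
  have hd : ∀ k, Y k k ≤ 1 := fun k => by
    rw [← h1, trace]
    exact Finset.single_le_sum (f := fun k => Y.diag k) (fun l _ => hY.diag_nonneg)
      (Finset.mem_univ k)
  have hs : Y j i = Y i j := by simpa using hY.1.apply i j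
  have h2 := hY.dotProduct_mulVec_nonneg (Pi.single i 1 + Pi.single j 1)
  have h3 := hY.dotProduct_mulVec_nonneg (Pi.single i 1 - Pi.single j 1)
  simp [mulVec_add, mulVec_sub, add_dotProduct, sub_dotProduct, dotProduct_add, dotProduct_sub, hs]
    at h2 h3
  have := hd i
  have := hd j
  rw [abs_le]
  constructor <;> linarith

lemma posSemidef_of_small {m : ℕ} (hm : 1 ≤ m) {X : Matrix (Fin m) (Fin m) ℝ} (hX : X.IsSymm)
    (hs : ∀ i j, |X i j| ≤ ((m : ℝ)⁻¹) ^ 2) : (X + (m : ℝ)⁻¹ • 1).PosSemidef := by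
  have hm0 : (0 : ℝ) < m := by exact_mod_cast hm
  refine PosSemidef.of_dotProduct_mulVec_nonneg ?_ fun x => ?_
  · have h : (X + (m : ℝ)⁻¹ • (1 : Matrix (Fin m) (Fin m) ℝ)).IsSymm := hX.add (isSymm_one.smul _)
    rwa [IsHermitian, conjTranspose_eq_transpose_of_trivial]
  ·
    -- each term is controlled by the arithmetic-geometric mean inequality
    have key : ∀ i j, -(((m : ℝ)⁻¹) ^ 2 * ((x i ^ 2 + x j ^ 2) / 2)) ≤ x i * (X i j * x j) := by
      intro i j
      have h1 : |x i * (X i j * x j)| ≤ ((m : ℝ)⁻¹) ^ 2 * ((x i ^ 2 + x j ^ 2) / 2) := by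
        have : |x i * (X i j * x j)| = |X i j| * (|x i| * |x j|) := by
          rw [abs_mul, abs_mul]; ring
        rw [this]
        refine mul_le_mul (hs i j) ?_ (by positivity) (by positivity)
        rw [← sq_abs (x i), ← sq_abs (x j)]
        nlinarith [sq_nonneg (|x i| - |x j|)]
      exact (abs_le.1 h1).1
    have hsum : -((m : ℝ)⁻¹ * ∑ i, x i ^ 2) ≤ ∑ i, ∑ j, x i * (X i j * x j) := by
      refine le_trans (le_of_eq ?_)
        (Finset.sum_le_sum fun i _ => Finset.sum_le_sum fun j _ => key i j)
      simp only [Finset.sum_neg_distrib, ← Finset.mul_sum, ← Finset.sum_div,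
        Finset.sum_add_distrib, Finset.sum_const, Finset.card_univ, Fintype.card_fin,
        nsmul_eq_mul]
      field_simp
      ring
    have e1 : star x ⬝ᵥ (X *ᵥ x) = ∑ i, ∑ j, x i * (X i j * x j) := by
      simp [dotProduct, mulVec, Finset.mul_sum]
    have e2 : star x ⬝ᵥ x = ∑ i, x i ^ 2 := by simp [dotProduct, sq]
    rw [add_mulVec, dotProduct_add, smul_mulVec, one_mulVec, dotProduct_smul, e1, e2, smul_eq_mul]
    linarith

/-! ### Closedness, convexity and boundedness -/

lemma isClosed_posSemidef (m : ℕ) : IsClosed {Y : Matrix (Fin m) (Fin m) ℝ | Y.PosSemidef} := by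
  simp only [posSemidef_iff_dotProduct_mulVec, IsHermitian, Set.ofPred_and, Set.ofPred_forall]
  refine IsClosed.inter (isClosed_eq (by fun_prop) continuous_id)
    (isClosed_iInter fun x => isClosed_le continuous_const ?_)
  fun_prop

lemma convex_spectra (m : ℕ) : Convex ℝ (spectra m) := by
  intro X hX Y hY a b ha hb hab
  have h : ((a • X + b • Y : TracelessSymm m) : Matrix (Fin m) (Fin m) ℝ) + (m : ℝ)⁻¹ • 1
      = a • ((X : Matrix (Fin m) (Fin m) ℝ) + (m : ℝ)⁻¹ • 1)
        + b • ((Y : Matrix (Fin m) (Fin m) ℝ) + (m : ℝ)⁻¹ • 1) := by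
    rw [smul_add, smul_add, add_add_add_comm, ← add_smul, hab, one_smul]
    rfl
  change (_ : Matrix (Fin m) (Fin m) ℝ).PosSemidef
  rw [h]
  exact (PosSemidef.smul hX ha).add (PosSemidef.smul hY hb)

lemma isClosed_spectra (m : ℕ) : IsClosed (spectra m) :=
  (isClosed_posSemidef m).preimage (f := fun X : TracelessSymm m =>
    (X : Matrix (Fin m) (Fin m) ℝ) + (m : ℝ)⁻¹ • 1) (by fun_prop)

lemma trace_add_center {m : ℕ} (hm : 1 ≤ m) (X : TracelessSymm m) :
    ((X : Matrix (Fin m) (Fin m) ℝ) + (m : ℝ)⁻¹ • 1).trace = 1 := by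
  have hm0 : (m : ℝ) ≠ 0 := by exact_mod_cast (by omega : m ≠ 0)
  rw [trace_add, X.2.2, trace_smul, trace_one]
  simp [hm0]

lemma continuous_entry {m : ℕ} (i j : Fin m) :
    Continuous fun X : TracelessSymm m => (X : Matrix (Fin m) (Fin m) ℝ) i j :=
  continuous_subtype_val.matrix_elem i j

lemma spectra_mem_nhds {m : ℕ} (hm : 1 ≤ m) : spectra m ∈ 𝓝 (0 : TracelessSymm m) := by
  have hm0 : (0 : ℝ) < m := by exact_mod_cast hm
  have h : ∀ᶠ X : TracelessSymm m in 𝓝 0, ∀ i j,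
      |(X : Matrix (Fin m) (Fin m) ℝ) i j| < ((m : ℝ)⁻¹) ^ 2 := by
    refine Filter.eventually_all.2 fun i => Filter.eventually_all.2 fun j => ?_
    refine (continuous_entry i j).abs.continuousAt.eventually_lt continuousAt_const ?_
    simp only [ZeroMemClass.coe_zero, Matrix.zero_apply, abs_zero]
    positivity
  filter_upwards [h] with X hX
  exact posSemidef_of_small hm X.2.1 fun i j => (hX i j).le

lemma isClosed_tracelessSymm (m : ℕ) :
    IsClosed (TracelessSymm m : Set (Matrix (Fin m) (Fin m) ℝ)) := by
  refine IsClosed.inter (s₁ := {X | Xᵀ = X}) (s₂ := {X | X.trace = 0})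
    (isClosed_eq (by fun_prop) continuous_id) (isClosed_eq ?_ continuous_const)
  fun_prop

/-- A set with uniformly bounded entries lies in a compact box, hence is bounded. -/
lemma isVonNBounded_of_entry {m : ℕ} (s : Set (TracelessSymm m)) (C : ℝ)
    (h : ∀ X ∈ s, ∀ i j, |(X : Matrix (Fin m) (Fin m) ℝ) i j| ≤ C) :
    Bornology.IsVonNBounded ℝ s := by
  have hc : IsCompact {X : Matrix (Fin m) (Fin m) ℝ | ∀ i ∈ Set.univ,
      X i ∈ {r : Fin m → ℝ | ∀ j ∈ Set.univ, r j ∈ Set.Icc (-C) C}} :=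
    isCompact_univ_pi fun _ => isCompact_univ_pi fun _ => isCompact_Icc
  have hk : IsCompact ((fun X : TracelessSymm m => (X : Matrix (Fin m) (Fin m) ℝ)) ⁻¹' _) :=
    (isClosed_tracelessSymm m).isClosedEmbedding_subtypeVal.isCompact_preimage hc
  refine Bornology.IsVonNBounded.subset ?_ (hk.isVonNBounded ℝ)
  exact fun X hX i _ j _ => abs_le.1 (h X hX i j)

lemma isVonNBounded_spectra {m : ℕ} (hm : 1 ≤ m) : Bornology.IsVonNBounded ℝ (spectra m) := by
  refine isVonNBounded_of_entry _ (1 + 1) fun X hX i j => ?_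
  have h1 := abs_entry_le hX (trace_add_center hm X) i j
  have h2 : |((m : ℝ)⁻¹ • (1 : Matrix (Fin m) (Fin m) ℝ)) i j| ≤ 1 := by
    have hm1 : (m : ℝ)⁻¹ ≤ 1 := inv_le_one_of_one_le₀ (by exact_mod_cast hm)
    rw [Matrix.smul_apply, one_apply]
    split_ifs
    · simpa using hm1
    · simp
  have h3 : (X : Matrix (Fin m) (Fin m) ℝ) i j
      = ((X : Matrix (Fin m) (Fin m) ℝ) + (m : ℝ)⁻¹ • 1) i j
        - ((m : ℝ)⁻¹ • (1 : Matrix (Fin m) (Fin m) ℝ)) i j := by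
    rw [Matrix.add_apply, add_sub_cancel_right]
  rw [h3]
  exact (abs_sub _ _).trans (add_le_add h1 h2)

lemma convex_frobBall (m : ℕ) : Convex ℝ (frobBall m) := by
  intro X hX Y hY a b ha hb hab
  simp only [frobBall, Set.mem_ofPred_eq, trace_transpose_mul_eq] at hX hY ⊢
  have h : ∑ j, ∑ i, ((a • X + b • Y : TracelessSymm m) : Matrix (Fin m) (Fin m) ℝ) i j ^ 2 ≤
      a * (∑ j, ∑ i, (X : Matrix (Fin m) (Fin m) ℝ) i j ^ 2)
        + b * ∑ j, ∑ i, (Y : Matrix (Fin m) (Fin m) ℝ) i j ^ 2 := by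
    simp only [Finset.mul_sum, ← Finset.sum_add_distrib]
    refine Finset.sum_le_sum fun j _ => Finset.sum_le_sum fun i _ => ?_
    exact (even_two.convexOn_pow (𝕜 := ℝ)).2 (Set.mem_univ _) (Set.mem_univ _) ha hb hab
  nlinarith

lemma continuous_frob (m : ℕ) : Continuous fun X : TracelessSymm m =>
    ((X : Matrix (Fin m) (Fin m) ℝ)ᵀ * (X : Matrix (Fin m) (Fin m) ℝ)).trace := by
  fun_prop

lemma isClosed_frobBall (m : ℕ) : IsClosed (frobBall m) :=
  isClosed_le (continuous_frob m) continuous_const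

lemma frobBall_mem_nhds (m : ℕ) : frobBall m ∈ 𝓝 (0 : TracelessSymm m) := by
  have h := (continuous_frob m).continuousAt.eventually_lt
    (continuousAt_const (y := (1 : ℝ)) (x := (0 : TracelessSymm m))) (by simp)
  filter_upwards [h] with X hX
  exact hX.le

lemma isVonNBounded_frobBall (m : ℕ) : Bornology.IsVonNBounded ℝ (frobBall m) := by
  refine isVonNBounded_of_entry _ 1 fun X hX i j => ?_
  simp only [frobBall, Set.mem_ofPred_eq, trace_transpose_mul_eq] at hX
  rw [← sq_le_one_iff_abs_le_one]
  refine le_trans ?_ hX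
  refine le_trans ?_ (Finset.single_le_sum
    (f := fun j => ∑ i, (X : Matrix (Fin m) (Fin m) ℝ) i j ^ 2)
    (fun k _ => Finset.sum_nonneg fun l _ => sq_nonneg _) (Finset.mem_univ j))
  exact Finset.single_le_sum (f := fun i => (X : Matrix (Fin m) (Fin m) ℝ) i j ^ 2)
    (fun l _ => sq_nonneg _) (Finset.mem_univ i)

/-! ### Invariance under orthogonal conjugation -/

/-- Conjugation by an orthogonal matrix, acting on trace-zero symmetric matrices. -/
def conjO {m : ℕ} (g : Matrix (Fin m) (Fin m) ℝ) (hg : gᵀ * g = 1) (X : TracelessSymm m) :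
    TracelessSymm m :=
  ⟨g * X * gᵀ, by
    refine ⟨?_, ?_⟩
    · rw [IsSymm, transpose_mul, transpose_mul, transpose_transpose, X.2.1.eq, mul_assoc]
    · rw [trace_mul_comm, ← mul_assoc, hg, one_mul, X.2.2]⟩

lemma conjO_smul {m : ℕ} (g : Matrix (Fin m) (Fin m) ℝ) (hg : gᵀ * g = 1) (c : ℝ)
    (X : TracelessSymm m) : conjO g hg (c • X) = c • conjO g hg X := by
  apply Subtype.ext
  simp [conjO]

lemma gauge_conjO {m : ℕ} (g : Matrix (Fin m) (Fin m) ℝ) (hg : gᵀ * g = 1)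
    (s : Set (TracelessSymm m)) (hs : ∀ X, conjO g hg X ∈ s ↔ X ∈ s) (X : TracelessSymm m) :
    gauge s (conjO g hg X) = gauge s X := by
  simp only [gauge_def', ← conjO_smul, hs]

lemma conjO_mem_spectra {m : ℕ} (g : Matrix (Fin m) (Fin m) ℝ) (hg : gᵀ * g = 1)
    (X : TracelessSymm m) : conjO g hg X ∈ spectra m ↔ X ∈ spectra m := by
  have hg' : g * gᵀ = 1 := mul_eq_one_comm.1 hg
  have h : ((conjO g hg X : TracelessSymm m) : Matrix (Fin m) (Fin m) ℝ) + (m : ℝ)⁻¹ • 1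
      = g * ((X : Matrix (Fin m) (Fin m) ℝ) + (m : ℝ)⁻¹ • 1) * gᵀ := by
    simp [conjO, mul_add, add_mul, hg']
  have hu : IsUnit g := IsUnit.of_mul_eq_one _ hg'
  have h2 := IsUnit.posSemidef_star_right_conjugate_iff hu
    (x := (X : Matrix (Fin m) (Fin m) ℝ) + (m : ℝ)⁻¹ • 1)
  rw [star_eq_conjTranspose, conjTranspose_eq_transpose_of_trivial, ← h] at h2
  exact h2

lemma conjO_mem_frobBall {m : ℕ} (g : Matrix (Fin m) (Fin m) ℝ) (hg : gᵀ * g = 1)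
    (X : TracelessSymm m) : conjO g hg X ∈ frobBall m ↔ X ∈ frobBall m := by
  have h : ((conjO g hg X : Matrix (Fin m) (Fin m) ℝ)ᵀ
      * (conjO g hg X : Matrix (Fin m) (Fin m) ℝ)).trace
      = ((X : Matrix (Fin m) (Fin m) ℝ)ᵀ * (X : Matrix (Fin m) (Fin m) ℝ)).trace := by
    have e : ((conjO g hg X : Matrix (Fin m) (Fin m) ℝ)ᵀ
        * (conjO g hg X : Matrix (Fin m) (Fin m) ℝ))
        = g * ((X : Matrix (Fin m) (Fin m) ℝ)ᵀ * ((gᵀ * g) * X)) * gᵀ := by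
      simp only [conjO, transpose_mul, transpose_transpose, mul_assoc]
    rw [e, hg, one_mul, trace_mul_comm, ← mul_assoc, hg, one_mul]
  simp only [frobBall, Set.mem_ofPred_eq, h]

lemma gaugeRescale_conjO {m : ℕ} (g : Matrix (Fin m) (Fin m) ℝ) (hg : gᵀ * g = 1)
    (X : TracelessSymm m) : gaugeRescale (spectra m) (frobBall m) (conjO g hg X)
      = conjO g hg (gaugeRescale (spectra m) (frobBall m) X) := by
  rw [gaugeRescale, gaugeRescale, conjO_smul, gauge_conjO g hg _ (conjO_mem_spectra g hg),
    gauge_conjO g hg _ (conjO_mem_frobBall g hg)]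

/-! ### The homeomorphism -/

/-- Translation by the barycentre, from trace-one positive semidefinite matrices to `spectra m`. -/
noncomputable def centerHomeo (m : ℕ) (hm : 1 ≤ m) :
    {Y : Matrix (Fin m) (Fin m) ℝ // Y.PosSemidef ∧ Y.trace = 1} ≃ₜ
      {X : TracelessSymm m // X ∈ spectra m} where
  toFun Y := ⟨⟨Y.1 - (m : ℝ)⁻¹ • 1, by
    have hm0 : (m : ℝ) ≠ 0 := by exact_mod_cast (by omega : m ≠ 0)
    refine ⟨?_, ?_⟩
    · have h : Y.1.IsSymm := by
        have := Y.2.1.1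
        rwa [IsHermitian, conjTranspose_eq_transpose_of_trivial] at this
      exact h.sub (isSymm_one.smul _)
    · rw [trace_sub, Y.2.2, trace_smul, trace_one]
      simp [hm0]⟩, by
    change (Y.1 - (m : ℝ)⁻¹ • 1 + (m : ℝ)⁻¹ • 1).PosSemidef
    rw [sub_add_cancel]
    exact Y.2.1⟩
  invFun X := ⟨X.1.1 + (m : ℝ)⁻¹ • 1, X.2, trace_add_center hm X.1⟩
  left_inv Y := by simp
  right_inv X := by simp
  continuous_toFun := by fun_prop
  continuous_invFun := by fun_prop

/-- Reassociation of the subtype of the ambient space defining the unit ball. -/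
def ballHomeo (m : ℕ) : {X : TracelessSymm m // X ∈ frobBall m} ≃ₜ
    {Z : Matrix (Fin m) (Fin m) ℝ // Z.IsSymm ∧ Z.trace = 0 ∧ (Zᵀ * Z).trace ≤ 1} where
  toFun X := ⟨X.1.1, X.1.2.1, X.1.2.2, X.2⟩
  invFun Z := ⟨⟨Z.1, Z.2.1, Z.2.2.1⟩, Z.2.2.2⟩
  left_inv _ := rfl
  right_inv _ := rfl
  continuous_toFun := by fun_prop
  continuous_invFun := by fun_prop

/-- The gauge rescaling homeomorphism restricted to the two closed convex bodies. -/
noncomputable def rescaleHomeo (m : ℕ) (hm : 1 ≤ m) :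
    {X : TracelessSymm m // X ∈ spectra m} ≃ₜ {X : TracelessSymm m // X ∈ frobBall m} :=
  (gaugeRescaleHomeomorph (spectra m) (frobBall m) (convex_spectra m) (spectra_mem_nhds hm)
    (isVonNBounded_spectra hm) (convex_frobBall m) (frobBall_mem_nhds m)
    (isVonNBounded_frobBall m)).subtype fun X => by
      have h := image_gaugeRescaleHomeomorph_closure (convex_spectra m) (spectra_mem_nhds hm)
        (isVonNBounded_spectra hm) (convex_frobBall m) (frobBall_mem_nhds m)
        (isVonNBounded_frobBall m)
      rw [(isClosed_spectra m).closure_eq, (isClosed_frobBall m).closure_eq] at h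
      exact (Homeomorph.injective _).mem_set_image.symm.trans (Set.ext_iff.1 h _)

/-- There is an `O(m)`-equivariant homeomorphism from `Sym*(m)` (symmetric
positive semidefinite trace-one matrices) onto the closed unit ball `D⁰(m)` in the space
of trace-zero symmetric matrices (Frobenius norm), equivariant for conjugation. -/
theorem stmt9 (m : ℕ) (hm : 1 ≤ m) :
    ∃ ψ : {Y : Matrix (Fin m) (Fin m) ℝ // Y.PosSemidef ∧ Y.trace = 1} ≃ₜ
          {Z : Matrix (Fin m) (Fin m) ℝ // Z.IsSymm ∧ Z.trace = 0 ∧ (Zᵀ * Z).trace ≤ 1},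
      ∀ (g : Matrix (Fin m) (Fin m) ℝ), gᵀ * g = 1 →
        ∀ (Y : {Y : Matrix (Fin m) (Fin m) ℝ // Y.PosSemidef ∧ Y.trace = 1})
          (hgY : (g * (Y : Matrix (Fin m) (Fin m) ℝ) * gᵀ).PosSemidef ∧
                 (g * (Y : Matrix (Fin m) (Fin m) ℝ) * gᵀ).trace = 1),
          (ψ ⟨g * (Y : Matrix (Fin m) (Fin m) ℝ) * gᵀ, hgY⟩ : Matrix (Fin m) (Fin m) ℝ) =
            g * (ψ Y : Matrix (Fin m) (Fin m) ℝ) * gᵀ := by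
  refine ⟨(centerHomeo m hm).trans ((rescaleHomeo m hm).trans (ballHomeo m)),
    fun g hg Y hgY => ?_⟩
  have hg' : g * gᵀ = 1 := mul_eq_one_comm.1 hg
  have h : (centerHomeo m hm ⟨g * Y.1 * gᵀ, hgY⟩ : TracelessSymm m)
      = conjO g hg (centerHomeo m hm Y : TracelessSymm m) := by
    apply Subtype.ext
    change g * Y.1 * gᵀ - (m : ℝ)⁻¹ • 1 = g * (Y.1 - (m : ℝ)⁻¹ • 1) * gᵀ
    simp [mul_sub, sub_mul, hg']
  change ((gaugeRescale (spectra m) (frobBall m)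
      (centerHomeo m hm ⟨g * Y.1 * gᵀ, hgY⟩ : TracelessSymm m) : TracelessSymm m) :
        Matrix (Fin m) (Fin m) ℝ) = _
  rw [h, gaugeRescale_conjO]
  rfl
end

section
/- Let 1 ≤ d ≤ m and let w₁,…,w_m > 0 be weights. Let G act on the real d×m matrices M(d,m) by X ↦ ψ X φ⁻¹ where ψ ∈ O(d) and φ ∈ O*(m) = D O(m) D⁻¹ with D = diag(√w₁,…,√w_m). For 1 ≤ k ≤ d define the polynomial function I_k(X) = Σ_{i₁<i₂<⋯<i_k} w_{i₁}w_{i₂}⋯w_{i_k} · det( (x_{i_s}·x_{i_t})_{s,t} ), where x₁,…,x_m are the columns of X. Then every G-invariant polynomial function F : M(d,m) → ℝ can be written as F = q(I₁,…,I_d) for a unique real polynomial q in d variables; i.e., the ring of G-invariant polynomial functions on M(d,m) is the polynomial ring generated by the algebraically independent functions I₁,…,I_d. -/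
/-! The substitution `Y = X D`, with `D = diag(√wᵢ)`, turns the action of `O(d) × O*(m)` into the
action `Y ↦ ψ Y gᵀ` of `O(d) × O(m)`, and `I_k(X)` into the sum of the principal `k × k` minors of
`Yᵀ Y`. That sum is a coefficient of `det (1 + T Yᵀ Y) = det (1 + T Y Yᵀ)`, hence equals the `k`-th
elementary symmetric function of the squared singular values of `Y` (`sumMinors_gram_eq_esymm`).

By the singular value decomposition (`exists_svd`), an invariant function is determined by its
restriction to the rectangular diagonal matrices `rectDiag t`. This restriction is a polynomial in
`t₁, …, t_d`, even in each variable and symmetric, because sign changes and permutations of the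
`tᵢ` are realised by the group. So it is a symmetric polynomial in the `tᵢ²`
(`exists_expand_of_even`), and the fundamental theorem of symmetric polynomials gives both the
existence of `q` and, as the `tᵢ` are arbitrary real numbers, its uniqueness. -/

open Matrix

namespace WeightedInvariants

/-! ### Sums of principal minors -/

/-- The sum of the principal `k × k` minors of a square matrix. -/
noncomputable def sumMinors {n : Type*} [Fintype n] [DecidableEq n] (M : Matrix n n ℝ) (k : ℕ) :
    ℝ :=
  ∑ S ∈ Finset.powersetCard k (Finset.univ : Finset n),
    (M.submatrix (fun i : S => (i : n)) (fun i : S => (i : n))).det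

/-- Weinstein–Aronszajn, read off coefficientwise from `det (1 + T A B) = det (1 + T B A)`. -/
lemma sumMinors_mul_comm {n p : Type*} [Fintype n] [DecidableEq n] [Fintype p] [DecidableEq p]
    (A : Matrix n p ℝ) (B : Matrix p n ℝ) (k : ℕ) :
    sumMinors (A * B) k = sumMinors (B * A) k := by
  unfold sumMinors
  rw [← coeff_det_one_add_X_smul_eq_sum_minors, ← coeff_det_one_add_X_smul_eq_sum_minors,
    Matrix.map_mul, Matrix.map_mul, ← Matrix.smul_mul, Matrix.det_one_add_mul_comm,
    Matrix.mul_smul]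

lemma sumMinors_diagonal {n : Type*} [Fintype n] [DecidableEq n] (v : n → ℝ) (k : ℕ) :
    sumMinors (diagonal v) k = ∑ S ∈ Finset.powersetCard k (Finset.univ : Finset n),
      ∏ i ∈ S, v i := by
  unfold sumMinors
  refine Finset.sum_congr rfl fun S _ => ?_
  rw [submatrix_diagonal _ _ Subtype.val_injective, det_diagonal]
  exact Finset.prod_coe_sort S v

/-- Rescaling the columns by `√wᵢ` absorbs the weights into the Gram minors. -/
lemma weighted_sum_eq_sumMinors {d m : ℕ} (w : Fin m → ℝ) (hw : ∀ i, 0 < w i)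
    (X : Matrix (Fin d) (Fin m) ℝ) (k : ℕ) :
    ∑ S ∈ Finset.powersetCard k (Finset.univ : Finset (Fin m)),
      (∏ i ∈ S, w i) *
        ((Xᵀ * X).submatrix (fun i : S => (i : Fin m)) (fun i : S => (i : Fin m))).det
      = sumMinors ((X * diagonal fun i => √(w i))ᵀ * (X * diagonal fun i => √(w i))) k := by
  unfold sumMinors
  refine Finset.sum_congr rfl fun S _ => ?_
  have h : ((X * diagonal fun i => √(w i))ᵀ * (X * diagonal fun i => √(w i))).submatrix
      (fun i : S => (i : Fin m)) (fun i : S => (i : Fin m)) =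
      diagonal (fun i : S => √(w i)) *
        (Xᵀ * X).submatrix (fun i : S => (i : Fin m)) (fun i : S => (i : Fin m)) *
        diagonal (fun i : S => √(w i)) := by
    ext i j
    rw [transpose_mul, diagonal_transpose, Matrix.mul_assoc, ← Matrix.mul_assoc Xᵀ]
    simp [mul_diagonal, diagonal_mul, mul_assoc]
  rw [h, det_mul, det_mul, det_diagonal, mul_right_comm, ← Finset.prod_mul_distrib]
  congr 1
  rw [← Finset.prod_coe_sort S w]
  exact Finset.prod_congr rfl fun i _ => (Real.mul_self_sqrt (hw i).le).symm

/-! ### Rectangular diagonal matrices and singular values -/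

/-- The `d × m` matrix with `t` on its main diagonal and zeros elsewhere. -/
def rectDiag {d m : ℕ} (hdm : d ≤ m) (t : Fin d → ℝ) : Matrix (Fin d) (Fin m) ℝ :=
  of fun i j => if Fin.castLE hdm i = j then t i else 0

lemma rectDiag_mul_apply {d m : ℕ} (hdm : d ≤ m) (t : Fin d → ℝ) {p : Type*}
    (B : Matrix (Fin m) p ℝ) (i : Fin d) (j : p) :
    (rectDiag hdm t * B) i j = t i * B (Fin.castLE hdm i) j := by
  simp [rectDiag, Matrix.mul_apply]

lemma rectDiag_mul_transpose {d m : ℕ} (hdm : d ≤ m) (t : Fin d → ℝ) :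
    rectDiag hdm t * (rectDiag hdm t)ᵀ = diagonal fun i => t i ^ 2 := by
  ext i j
  rw [rectDiag_mul_apply]
  by_cases h : i = j
  · subst h
    simp [rectDiag, sq]
  · have : Fin.castLE hdm j ≠ Fin.castLE hdm i := fun e => h (Fin.castLE_injective hdm e).symm
    simp [rectDiag, h, this]

/-- The basic invariants are the elementary symmetric functions of the squared singular values. -/
lemma sumMinors_gram_eq_esymm {d m : ℕ} (hdm : d ≤ m) (Y : Matrix (Fin d) (Fin m) ℝ)
    (ψ : Matrix (Fin d) (Fin d) ℝ) (g : Matrix (Fin m) (Fin m) ℝ) (t : Fin d → ℝ)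
    (hψ : ψᵀ * ψ = 1) (hg : gᵀ * g = 1) (h : ψ * Y * gᵀ = rectDiag hdm t) (k : ℕ) :
    sumMinors (Yᵀ * Y) k =
      ∑ S ∈ Finset.powersetCard k (Finset.univ : Finset (Fin d)), ∏ i ∈ S, t i ^ 2 := by
  have key : (ψ * (Y * Yᵀ)) * ψᵀ = diagonal fun i => t i ^ 2 := by
    rw [← rectDiag_mul_transpose hdm, ← h, transpose_mul, transpose_mul, transpose_transpose]
    simp only [Matrix.mul_assoc]
    rw [← Matrix.mul_assoc gᵀ, hg, Matrix.one_mul]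
  rw [← sumMinors_diagonal, ← key, sumMinors_mul_comm, sumMinors_mul_comm _ ψᵀ,
    ← Matrix.mul_assoc, hψ, Matrix.one_mul]

/-- Singular value decomposition of a real `d × m` matrix with `d ≤ m`. -/
lemma exists_svd {d m : ℕ} (hdm : d ≤ m) (Y : Matrix (Fin d) (Fin m) ℝ) :
    ∃ (ψ : Matrix (Fin d) (Fin d) ℝ) (g : Matrix (Fin m) (Fin m) ℝ) (t : Fin d → ℝ),
      ψᵀ * ψ = 1 ∧ gᵀ * g = 1 ∧ ψ * Y * gᵀ = rectDiag hdm t := by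
  have hA : (Y * Yᵀ).PosSemidef := by
    simpa using posSemidef_self_mul_conjTranspose Y
  obtain ⟨U, hU, Λ, hΛ, hUY⟩ : ∃ U : Matrix (Fin d) (Fin d) ℝ, U * Uᵀ = 1 ∧
      ∃ Λ : Fin d → ℝ, (∀ i, 0 ≤ Λ i) ∧ Uᵀ * (Y * Yᵀ) * U = diagonal Λ := by
    refine ⟨hA.1.eigenvectorUnitary, ?_, hA.1.eigenvalues, hA.eigenvalues_nonneg, ?_⟩
    · simpa [star_eq_conjTranspose] using Unitary.coe_mul_star_self hA.1.eigenvectorUnitary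
    · simpa [Unitary.conjStarAlgAut_apply, star_eq_conjTranspose, Function.comp_def] using
        hA.1.conjStarAlgAut_star_eigenvectorUnitary
  set Z := Uᵀ * Y with hZ
  have hZZ : ∀ i j, ∑ l, Z i l * Z j l = diagonal Λ i j := by
    intro i j
    rw [← hUY, show Uᵀ * (Y * Yᵀ) * U = Z * Zᵀ by
      simp [hZ, transpose_mul, Matrix.mul_assoc]]
    simp [Matrix.mul_apply]
  let v : Fin m → EuclideanSpace ℝ (Fin m) := fun i =>
    if h : (i : ℕ) < d then WithLp.toLp 2 fun j => (√(Λ ⟨i, h⟩))⁻¹ * Z ⟨i, h⟩ j else 0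
  let s : Set (Fin m) := {i | ∃ h : (i : ℕ) < d, Λ ⟨i, h⟩ ≠ 0}
  -- The nonzero rows of `Z` are pairwise orthogonal, so they extend to an orthonormal basis.
  have hv : Orthonormal ℝ (s.domRestrict v) := by
    rw [orthonormal_iff_ite]
    rintro ⟨i, hi, hi0⟩ ⟨j, hj, hj0⟩
    have h1 : inner ℝ (v i) (v j) =
        (√(Λ ⟨i, hi⟩))⁻¹ * (√(Λ ⟨j, hj⟩))⁻¹ * ∑ l, Z ⟨i, hi⟩ l * Z ⟨j, hj⟩ l := by
      simp only [v, hi, hj, dif_pos, PiLp.inner_apply, Finset.mul_sum]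
      refine Finset.sum_congr rfl fun l _ => ?_
      simp
      ring
    change inner ℝ (v i) (v j) = _
    rw [h1, hZZ]
    by_cases hij : i = j
    · subst hij
      have hp : 0 < Λ ⟨i, hi⟩ := lt_of_le_of_ne (hΛ _) (Ne.symm hi0)
      rw [diagonal_apply_eq, ← mul_inv, Real.mul_self_sqrt hp.le, inv_mul_cancel₀ hi0]
      simp
    · rw [diagonal_apply_ne _ (by simpa [Fin.ext_iff] using hij)]
      simp [hij]
  obtain ⟨b, hb⟩ := hv.exists_orthonormalBasis_extension_of_card_eq (by simp)
  let B : Matrix (Fin m) (Fin m) ℝ := of fun i j => b i j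
  have hB : B * Bᵀ = 1 := by
    ext i j
    have := orthonormal_iff_ite.1 b.orthonormal j i
    simp only [PiLp.inner_apply] at this
    simpa [Matrix.mul_apply, B, Matrix.one_apply, eq_comm] using this
  refine ⟨Uᵀ, B, fun i => √(Λ i), by simpa using hU, mul_eq_one_comm.1 hB, ?_⟩
  have hR : Z = rectDiag hdm (fun i => √(Λ i)) * B := by
    ext i j
    rw [rectDiag_mul_apply]
    by_cases h0 : Λ i = 0
    · have h2 := hZZ i i
      rw [diagonal_apply_eq, h0,
        Finset.sum_eq_zero_iff_of_nonneg fun _ _ => mul_self_nonneg _] at h2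
      simpa [h0] using h2 j (Finset.mem_univ j)
    · have hb' := hb (Fin.castLE hdm i) ⟨i.2, h0⟩
      have hp : √(Λ i) ≠ 0 := (Real.sqrt_pos.2 (lt_of_le_of_ne (hΛ _) (Ne.symm h0))).ne'
      simp [B, hb', v, hp]
  rw [← hZ, hR, Matrix.mul_assoc, hB, Matrix.mul_one]

lemma rectDiag_signs {d m : ℕ} (hdm : d ≤ m) (ε t : Fin d → ℝ) :
    rectDiag hdm (fun i => ε i * t i) = diagonal ε * rectDiag hdm t := by
  ext i j
  simp [rectDiag]

/-- Permuting the diagonal of `rectDiag t` is achieved by permuting rows and columns. -/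
lemma rectDiag_perm {d m : ℕ} (hdm : d ≤ m) (σ : Equiv.Perm (Fin d)) (t : Fin d → ℝ) :
    ∃ (ψ : Matrix (Fin d) (Fin d) ℝ) (g : Matrix (Fin m) (Fin m) ℝ),
      ψᵀ * ψ = 1 ∧ gᵀ * g = 1 ∧ rectDiag hdm (t ∘ σ) = ψ * rectDiag hdm t * gᵀ := by
  let τ : Equiv.Perm (Fin m) := σ.viaFintypeEmbedding (Fin.castLEEmb hdm)
  have hτ : ∀ i, τ (Fin.castLE hdm i) = Fin.castLE hdm (σ i) := fun i =>
    σ.viaFintypeEmbedding_apply_image (Fin.castLEEmb hdm) i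
  have horth : ∀ {n : ℕ} (ρ : Equiv.Perm (Fin n)),
      ((1 : Matrix (Fin n) (Fin n) ℝ).submatrix ρ id)ᵀ *
        (1 : Matrix (Fin n) (Fin n) ℝ).submatrix ρ id = 1 := by
    intro n ρ
    rw [transpose_submatrix, transpose_one, submatrix_mul_equiv, Matrix.one_mul, submatrix_id_id]
  refine ⟨(1 : Matrix (Fin d) (Fin d) ℝ).submatrix σ id, (1 : Matrix (Fin m) (Fin m) ℝ).submatrix τ id,
    horth σ, horth τ, ?_⟩
  have : rectDiag hdm (t ∘ σ) = (rectDiag hdm t).submatrix σ τ := by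
    ext i j
    simp [rectDiag, ← hτ]
  rw [this]
  ext i j
  simp [Matrix.mul_apply, Matrix.one_apply]

/-! ### Even polynomials -/

/-- Substituting `εᵢ Xᵢ` for `Xᵢ` multiplies the coefficient at `e` by `∏ εᵢ ^ eᵢ`. -/
lemma coeff_aeval_signs {σ : Type*} (ε : σ → ℝ) (p : MvPolynomial σ ℝ) (e : σ →₀ ℕ) :
    MvPolynomial.coeff e
      (MvPolynomial.aeval (fun i => MvPolynomial.C (ε i) * MvPolynomial.X i) p) =
      (e.prod fun i n => ε i ^ n) * MvPolynomial.coeff e p := by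
  classical
  induction p using MvPolynomial.induction_on' with
  | monomial u a =>
    rw [MvPolynomial.aeval_monomial]
    have : (u.prod fun i k => (MvPolynomial.C (ε i) * MvPolynomial.X i : MvPolynomial σ ℝ) ^ k) =
        MvPolynomial.monomial u (u.prod fun i k => ε i ^ k) := by
      rw [MvPolynomial.monomial_eq]
      simp [mul_pow, Finsupp.prod, Finset.prod_mul_distrib]
    rw [this, MvPolynomial.algebraMap_eq, MvPolynomial.C_mul_monomial, MvPolynomial.coeff_monomial,
      MvPolynomial.coeff_monomial]
    split_ifs with h
    · rw [h, mul_comm]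
    · simp
  | add p q hp hq => rw [map_add, MvPolynomial.coeff_add, MvPolynomial.coeff_add, hp, hq, mul_add]

/-- A polynomial that is even in each variable is a polynomial in the squares. -/
lemma exists_expand_of_even {n : ℕ} (p : MvPolynomial (Fin n) ℝ)
    (h : ∀ ε : Fin n → ℝ, (∀ i, ε i * ε i = 1) →
      ∀ t : Fin n → ℝ, MvPolynomial.eval (fun i => ε i * t i) p = MvPolynomial.eval t p) :
    ∃ g : MvPolynomial (Fin n) ℝ, p = MvPolynomial.expand 2 g := by
  have heven : ∀ e ∈ p.support, ∀ i, Even (e i) := by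
    intro e he i
    by_contra hodd
    rw [Nat.not_even_iff_odd] at hodd
    -- Flipping the sign of the `i`-th variable fixes `p` but negates its coefficient at `e`.
    let ε : Fin n → ℝ := fun j => if j = i then -1 else 1
    have hp : MvPolynomial.aeval (fun i => MvPolynomial.C (ε i) * MvPolynomial.X i) p = p := by
      refine MvPolynomial.funext fun t => ?_
      rw [← h ε (fun j => by by_cases hj : j = i <;> simp [ε, hj]) t,
        ← MvPolynomial.coe_aeval_eq_eval, ← MvPolynomial.coe_aeval_eq_eval]
      change MvPolynomial.aeval t _ = MvPolynomial.aeval _ p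
      rw [← AlgHom.comp_apply, MvPolynomial.comp_aeval]
      simp
    have hc := coeff_aeval_signs ε p e
    have hprod : (e.prod fun i n => ε i ^ n) = -1 := by
      rw [Finsupp.prod_fintype _ _ (by simp), Finset.prod_eq_single i]
      · simp [ε, hodd.neg_one_pow]
      · intro j _ hj
        simp [ε, hj]
      · simp
    rw [hp, hprod] at hc
    exact MvPolynomial.mem_support_iff.1 he (by linarith)
  have hmem : p ∈ (MvPolynomial.expand (R := ℝ) (σ := Fin n) 2).range := by
    rw [p.as_sum]
    refine Subalgebra.sum_mem _ fun e he => ?_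
    refine ⟨MvPolynomial.monomial (Finsupp.equivFunOnFinite.symm fun i => e i / 2)
      (MvPolynomial.coeff e p), ?_⟩
    change MvPolynomial.expand 2 _ = _
    rw [MvPolynomial.expand_monomial]
    refine congrArg (fun u => MvPolynomial.monomial u _) ?_
    ext i
    have := heven e he i
    simp [Nat.mul_div_cancel' this.two_dvd]
  obtain ⟨g, hg⟩ := hmem
  exact ⟨g, hg.symm⟩

lemma eval_esymmAlgHom {d : ℕ} (q : MvPolynomial (Fin d) ℝ) (s : Fin d → ℝ) :
    MvPolynomial.eval s (MvPolynomial.esymmAlgHom (Fin d) ℝ d q).val =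
      MvPolynomial.eval (fun k : Fin d =>
        ∑ S ∈ Finset.powersetCard ((k : ℕ) + 1) (Finset.univ : Finset (Fin d)), ∏ i ∈ S, s i) q := by
  rw [MvPolynomial.esymmAlgHom_apply, ← MvPolynomial.coe_aeval_eq_eval,
    ← MvPolynomial.coe_aeval_eq_eval]
  change MvPolynomial.aeval s _ = MvPolynomial.aeval _ q
  rw [← AlgHom.comp_apply, MvPolynomial.comp_aeval]
  simp [MvPolynomial.esymm]

end WeightedInvariants

/-! ### The ring of invariants -/

open WeightedInvariants

/-- For `1 ≤ d ≤ m` and positive weights `w₁,…,w_m`, every polynomial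
function on `M(d,m)` invariant under `O(d) × O*(m)` (where `O*(m) = D O(m) D⁻¹`,
`D = diag(√w₁,…,√w_m)`) is a polynomial, in a unique way, in the basic invariants
`I_k(X) = ∑_{i₁<⋯<i_k} w_{i₁}⋯w_{i_k} det((x_{i_s}·x_{i_t})_{s,t})`, `1 ≤ k ≤ d`. -/
theorem stmt14 (d m : ℕ) (hd : 1 ≤ d) (hdm : d ≤ m)
    (w : Fin m → ℝ) (hw : ∀ i, 0 < w i)
    (F : Matrix (Fin d) (Fin m) ℝ → ℝ)
    (hpoly : ∃ P : MvPolynomial (Fin d × Fin m) ℝ,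
      F = fun X => MvPolynomial.eval (fun p => X p.1 p.2) P)
    (hinv : ∀ (ψ : Matrix (Fin d) (Fin d) ℝ) (g : Matrix (Fin m) (Fin m) ℝ),
      ψᵀ * ψ = 1 → gᵀ * g = 1 →
      ∀ X : Matrix (Fin d) (Fin m) ℝ,
        F (ψ * X * (Matrix.diagonal (fun i => Real.sqrt (w i)) * gᵀ *
          Matrix.diagonal (fun i => (Real.sqrt (w i))⁻¹))) = F X) :
    ∃! q : MvPolynomial (Fin d) ℝ,
      F = fun X => MvPolynomial.eval
        (fun k : Fin d =>
          ∑ S ∈ Finset.powersetCard ((k : ℕ) + 1) (Finset.univ : Finset (Fin m)),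
            (∏ i ∈ S, w i) *
              ((Xᵀ * X).submatrix (fun i : S => (i : Fin m)) (fun i : S => (i : Fin m))).det)
        q := by
  have hs : ∀ i, √(w i) ≠ 0 := fun i => (Real.sqrt_pos.2 (hw i)).ne'
  set D : Matrix (Fin m) (Fin m) ℝ := diagonal fun i => √(w i) with hD
  set E : Matrix (Fin m) (Fin m) ℝ := diagonal fun i => (√(w i))⁻¹ with hE
  have hDE : D * E = 1 := by simp [hD, hE, hs]
  have hED : E * D = 1 := by simp [hD, hE, hs]
  -- In the coordinate `Y = X D` the function `F` is `O(d) × O(m)`-invariant.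
  have hG : ∀ (ψ : Matrix (Fin d) (Fin d) ℝ) (g : Matrix (Fin m) (Fin m) ℝ),
      ψᵀ * ψ = 1 → gᵀ * g = 1 → ∀ Y : Matrix (Fin d) (Fin m) ℝ,
        F (ψ * Y * gᵀ * E) = F (Y * E) := by
    intro ψ g hψ hg Y
    rw [← hinv ψ g hψ hg (Y * E)]
    congr 1
    simp only [Matrix.mul_assoc]
    rw [← Matrix.mul_assoc E, hED, Matrix.one_mul]
  obtain ⟨P, hP⟩ := hpoly
  -- `f` is the restriction of this function to the matrices `Y = rectDiag t`, as a polynomial in `t`.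
  let f : MvPolynomial (Fin d) ℝ := MvPolynomial.aeval (fun p : Fin d × Fin m =>
    if Fin.castLE hdm p.1 = p.2 then
      MvPolynomial.C ((√(w p.2))⁻¹) * MvPolynomial.X p.1 else 0) P
  have hf : ∀ t, MvPolynomial.eval t f = F (rectDiag hdm t * E) := by
    intro t
    rw [hP]
    simp only [f]
    rw [← MvPolynomial.coe_aeval_eq_eval, ← MvPolynomial.coe_aeval_eq_eval]
    change MvPolynomial.aeval t _ = MvPolynomial.aeval _ P
    rw [← AlgHom.comp_apply, MvPolynomial.comp_aeval]
    congr 2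
    funext p
    simp only [rectDiag_mul_apply, hE, diagonal_apply]
    split_ifs with h
    · simp [h, mul_comm]
    · simp
  obtain ⟨h, hh⟩ := exists_expand_of_even f (by
    intro ε hε t
    rw [hf, hf, rectDiag_signs]
    have := hG (diagonal ε) 1 (by simp [hε]) (by simp) (rectDiag hdm t)
    simpa using this)
  have hsymm : h.IsSymmetric := by
    intro σ
    apply MvPolynomial.expand_injective (n := 2) two_pos
    rw [← MvPolynomial.rename_expand, ← hh]
    refine MvPolynomial.funext fun t => ?_
    obtain ⟨ψ, g, hψ, hg, he⟩ := rectDiag_perm hdm σ t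
    rw [MvPolynomial.eval_rename, hf, hf, he, hG ψ g hψ hg]
  obtain ⟨q, hq⟩ := MvPolynomial.esymmAlgHom_surjective (σ := Fin d) ℝ (n := d) (by simp) ⟨h, hsymm⟩
  have hq' : ∀ s, MvPolynomial.eval s h = MvPolynomial.eval (fun k : Fin d =>
      ∑ S ∈ Finset.powersetCard ((k : ℕ) + 1) (Finset.univ : Finset (Fin d)), ∏ i ∈ S, s i) q := by
    intro s
    rw [← eval_esymmAlgHom, hq]
  simp only [weighted_sum_eq_sumMinors w hw, ← hD]
  refine ⟨q, ?_, ?_⟩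
  · funext X
    obtain ⟨ψ, g, t, hψ, hg, he⟩ := exists_svd hdm (X * D)
    have h1 : F X = F (rectDiag hdm t * E) := by
      rw [← he, hG ψ g hψ hg, Matrix.mul_assoc, hDE, Matrix.mul_one]
    rw [h1, ← hf, hh, MvPolynomial.eval_expand, hq']
    simp only [sumMinors_gram_eq_esymm hdm (X * D) ψ g t hψ hg he, Pi.pow_apply]
  · intro q' hFq'
    apply MvPolynomial.esymmAlgHom_injective (σ := Fin d) (R := ℝ) (n := d) (by simp)
    rw [hq]
    refine Subtype.ext (MvPolynomial.expand_injective (n := 2) two_pos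
      (MvPolynomial.funext fun t => ?_))
    rw [← hh, MvPolynomial.eval_expand, eval_esymmAlgHom, hf, hFq']
    have hY : rectDiag hdm t * E * D = rectDiag hdm t := by
      rw [Matrix.mul_assoc, hED, Matrix.mul_one]
    simp only [hY, sumMinors_gram_eq_esymm hdm (rectDiag hdm t) 1 1 t (by simp) (by simp) (by simp),
      Pi.pow_apply]
end

section
/- Let n ≥ 2 and m₁,…,mₙ > 0, and set μ_{ij} = mᵢm_j/(mᵢ+m_j). Call a family of vectors w_{ij} ∈ ℝ^{n−1} (for 1 ≤ i ≠ j ≤ n, with w_{ij} = −w_{ji}) a weighted root system with mass distribution (m₁,…,mₙ) if: (i) ‖w_{ij}‖² = 1/μ_{ij} = (mᵢ+m_j)/(mᵢm_j) for all i ≠ j; (ii) w_{ik} · w_{jl} = 0 whenever {i,k} ∩ {j,l} = ∅; (iii) w_{ik} · w_{kj} = −1/m_k for all pairwise distinct i, j, k. Then any two weighted root systems {w_{ij}} and {w′_{ij}} with the same mass distribution are orthogonally equivalent: there exists an orthogonal transformation φ ∈ O(n−1) with w′_{ij} = φ(w_{ij}) for all i ≠ j. -/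
/-!
The three conditions, together with antisymmetry, determine every inner product `⟪w i j, w k l⟫`
from the masses alone, according to whether `{i, j}` and `{k, l}` share two, one or no elements
(`inner_eq_of_root_systems`). Two families with the same Gram matrix in a finite-dimensional
inner product space differ by a linear isometry of that space (`exists_isometry_of_gram_eq`), so
neither a basis of roots nor the dimension `n - 1` plays a role.
-/

open scoped RealInnerProductSpace

/-- Two finite families with the same Gram matrix are orthogonally equivalent: sending
`∑ c a • v a` to `∑ c a • v' a` is an isometry from the span of `v`, and it extends to the whole
space by finite-dimensionality. -/
theorem exists_isometry_of_gram_eq {E ι : Type*} [NormedAddCommGroup E] [InnerProductSpace ℝ E]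
    [FiniteDimensional ℝ E] [Fintype ι] (v v' : ι → E)
    (h : ∀ a b, ⟪v' a, v' b⟫ = ⟪v a, v b⟫) :
    ∃ φ : E ≃ₗᵢ[ℝ] E, ∀ a, v' a = φ (v a) := by
  classical
  let T := Fintype.linearCombination ℝ v
  let T' := Fintype.linearCombination ℝ v'
  have hnorm : ∀ c, ‖T' c‖ = ‖T c‖ := by
    intro c
    have h2 : ⟪T' c, T' c⟫ = ⟪T c, T c⟫ := by
      simp only [T, T', Fintype.linearCombination_apply, sum_inner, inner_sum,
        real_inner_smul_left, real_inner_smul_right, h]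
    rw [real_inner_self_eq_norm_sq, real_inner_self_eq_norm_sq] at h2
    exact (sq_eq_sq₀ (norm_nonneg _) (norm_nonneg _)).1 h2
  obtain ⟨g, hg⟩ := T.rangeRestrict.exists_rightInverse_of_surjective T.range_rangeRestrict
  have hg' : ∀ x, T (g x) = x := fun x => congrArg Subtype.val (LinearMap.congr_fun hg x)
  let f : LinearMap.range T →ₗᵢ[ℝ] E :=
    ⟨T' ∘ₗ g, fun x => by
      rw [LinearMap.comp_apply, hnorm, hg', Submodule.coe_norm]⟩
  refine ⟨f.extend.toLinearIsometryEquiv rfl, fun a => ?_⟩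
  have hv : T (Pi.single a 1) = v a := by simp [T]
  have hv' : T' (Pi.single a 1) = v' a := by simp [T']
  have hmem : v a ∈ LinearMap.range T := ⟨_, hv⟩
  -- `g ⟨v a, _⟩` and `Pi.single a 1` differ by an element of `ker T = ker T'`.
  have hker : T' (g ⟨v a, hmem⟩ - Pi.single a 1) = 0 := by
    rw [← norm_eq_zero, hnorm, map_sub, hg', hv, sub_self, norm_zero]
  rw [map_sub, hv', sub_eq_zero] at hker
  rw [LinearIsometry.coe_toLinearIsometryEquiv]
  exact hker.symm.trans (f.extend_apply ⟨v a, hmem⟩).symm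

/-- The inner products of a weighted root system depend on the masses only; a pair of roots with
one common index is brought by antisymmetry to the form `w i k, w k j`. -/
theorem inner_eq_of_root_systems {E ι : Type*} [NormedAddCommGroup E] [InnerProductSpace ℝ E]
    (m : ι → ℝ) (w w' : ι → ι → E)
    (hanti : ∀ i j, i ≠ j → w i j = -w j i)
    (hnorm : ∀ i j, i ≠ j → ⟪w i j, w i j⟫ = (m i + m j) / (m i * m j))
    (horth : ∀ i k j l, i ≠ k → j ≠ l → i ≠ j → i ≠ l → k ≠ j → k ≠ l →
      ⟪w i k, w j l⟫ = 0)
    (hang : ∀ i j k, i ≠ j → j ≠ k → i ≠ k → ⟪w i k, w k j⟫ = -(1 / m k))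
    (hanti' : ∀ i j, i ≠ j → w' i j = -w' j i)
    (hnorm' : ∀ i j, i ≠ j → ⟪w' i j, w' i j⟫ = (m i + m j) / (m i * m j))
    (horth' : ∀ i k j l, i ≠ k → j ≠ l → i ≠ j → i ≠ l → k ≠ j → k ≠ l →
      ⟪w' i k, w' j l⟫ = 0)
    (hang' : ∀ i j k, i ≠ j → j ≠ k → i ≠ k → ⟪w' i k, w' k j⟫ = -(1 / m k))
    {i j k l : ι} (hij : i ≠ j) (hkl : k ≠ l) : ⟪w' i j, w' k l⟫ = ⟪w i j, w k l⟫ := by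
  by_cases hik : i = k
  · subst hik
    by_cases hjl : j = l
    · subst hjl
      rw [hnorm _ _ hij, hnorm' _ _ hij]
    · rw [hanti _ _ hij, hanti' _ _ hij, inner_neg_left, inner_neg_left,
        hang _ _ _ hjl hkl.symm hij.symm, hang' _ _ _ hjl hkl.symm hij.symm]
  by_cases hil : i = l
  · subst hil
    rw [hanti _ _ hkl, hanti' _ _ hkl, inner_neg_right, inner_neg_right]
    by_cases hjk : j = k
    · subst hjk
      rw [hnorm _ _ hij, hnorm' _ _ hij]
    · rw [hanti _ _ hij, hanti' _ _ hij, inner_neg_left, inner_neg_left,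
        hang _ _ _ hjk hkl hij.symm, hang' _ _ _ hjk hkl hij.symm]
  by_cases hjk : j = k
  · subst hjk
    rw [hang _ _ _ hil hkl.symm hij, hang' _ _ _ hil hkl.symm hij]
  by_cases hjl : j = l
  · subst hjl
    rw [hanti _ _ hkl, hanti' _ _ hkl, inner_neg_right, inner_neg_right,
      hang _ _ _ hik hkl hij, hang' _ _ _ hik hkl hij]
  rw [horth _ _ _ _ hij hkl hik hil hjk hjl, horth' _ _ _ _ hij hkl hik hil hjk hjl]

/-- Any two weighted root systems in `ℝ^{n−1}` with the same mass
distribution `(m₁,…,mₙ)` are orthogonally equivalent. -/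
theorem stmt15 (n : ℕ) (hn : 2 ≤ n) (m : Fin n → ℝ) (hm : ∀ i, 0 < m i)
    (w w' : Fin n → Fin n → EuclideanSpace ℝ (Fin (n - 1)))
    (hanti : ∀ i j, i ≠ j → w i j = -w j i)
    (hnorm : ∀ i j, i ≠ j → ⟪w i j, w i j⟫ = (m i + m j) / (m i * m j))
    (horth : ∀ i k j l, i ≠ k → j ≠ l → i ≠ j → i ≠ l → k ≠ j → k ≠ l →
      ⟪w i k, w j l⟫ = 0)
    (hang : ∀ i j k, i ≠ j → j ≠ k → i ≠ k → ⟪w i k, w k j⟫ = -(1 / m k))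
    (hanti' : ∀ i j, i ≠ j → w' i j = -w' j i)
    (hnorm' : ∀ i j, i ≠ j → ⟪w' i j, w' i j⟫ = (m i + m j) / (m i * m j))
    (horth' : ∀ i k j l, i ≠ k → j ≠ l → i ≠ j → i ≠ l → k ≠ j → k ≠ l →
      ⟪w' i k, w' j l⟫ = 0)
    (hang' : ∀ i j k, i ≠ j → j ≠ k → i ≠ k → ⟪w' i k, w' k j⟫ = -(1 / m k)) :
    ∃ φ : EuclideanSpace ℝ (Fin (n - 1)) ≃ₗᵢ[ℝ] EuclideanSpace ℝ (Fin (n - 1)),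
      ∀ i j, i ≠ j → w' i j = φ (w i j) := by
  obtain ⟨φ, hφ⟩ := exists_isometry_of_gram_eq
    (fun p : {p : Fin n × Fin n // p.1 ≠ p.2} => w p.1.1 p.1.2)
    (fun p => w' p.1.1 p.1.2)
    (fun p q => inner_eq_of_root_systems m w w' hanti hnorm horth hang
      hanti' hnorm' horth' hang' p.2 q.2)
  exact ⟨φ, fun i j hij => hφ ⟨(i, j), hij⟩⟩
end

section
/- Let n ≥ 2 and m₁,…,mₙ > 0. Consider the convex open set C₀ = { a = (a₁,…,aₙ) ∈ ℝⁿ : Σᵢ mᵢaᵢ = 0 and a₁ > a₂ > ⋯ > aₙ }, a relatively open convex subset of the hyperplane {Σᵢ mᵢaᵢ = 0}. Then the Newtonian collinear potential U(a) = Σ_{1 ≤ i < j ≤ n} mᵢm_j/(aᵢ − a_j) is strictly convex on C₀: for all a ≠ a′ in C₀ and 0 < t < 1, U(ta + (1−t)a′) < tU(a) + (1−t)U(a′). -/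
/-!
Each summand of `U` is the strictly convex function `x ↦ c / x` on `(0, ∞)`, with `c = mᵢmⱼ > 0`,
composed with the linear form `a ↦ aᵢ - aⱼ`, so `U` is convex on the chamber. Equality at a proper
convex combination of `a` and `b` would force `aᵢ - aⱼ = bᵢ - bⱼ` for all pairs, i.e. `b` would be a
translate of `a`; since both have their center of mass at the origin and the total mass is positive,
the translation is zero (`exists_pair_diff_ne`).
-/

/-- Strict convexity of `x ↦ c / x` on the positive half-line. -/
lemma div_combo_lt {c x y s t : ℝ} (hc : 0 < c) (hx : 0 < x) (hy : 0 < y) (hxy : x ≠ y)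
    (hs : 0 < s) (ht : 0 < t) (hst : s + t = 1) :
    c / (s * x + t * y) < s * (c / x) + t * (c / y) := by
  have hz : 0 < s * x + t * y := by positivity
  have hd : 0 < (x - y) ^ 2 := by have := sub_ne_zero.mpr hxy; positivity
  have key : s * (c / x) + t * (c / y) - c / (s * x + t * y)
      = c * s * t * (x - y) ^ 2 / (x * y * (s * x + t * y)) := by
    obtain rfl : t = 1 - s := by linarith
    field_simp
    ring
  have : 0 < c * s * t * (x - y) ^ 2 / (x * y * (s * x + t * y)) := by positivity
  linarith

/-- Distinct configurations with the same center of mass are not translates of each other, so some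
mutual distance differs. -/
lemma exists_pair_diff_ne {n : ℕ} {m a b : Fin n → ℝ} (hm : ∀ i, 0 < m i)
    (ha : ∑ i, m i * a i = 0) (hb : ∑ i, m i * b i = 0) (hab : a ≠ b) :
    ∃ i j : Fin n, i < j ∧ a i - a j ≠ b i - b j := by
  by_contra! h
  have h' : ∀ i j, a j - b j = a i - b i := fun i j => by
    rcases lt_trichotomy i j with hij | rfl | hij
    · linarith [h i j hij]
    · rfl
    · linarith [h j i hij]
  refine hab (funext fun i => ?_)
  have hsum : (∑ j, m j) * (a i - b i) = 0 := by
    calc (∑ j, m j) * (a i - b i) = ∑ j, m j * (a j - b j) := by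
          rw [Finset.sum_mul]
          exact Finset.sum_congr rfl fun j _ => by rw [h' i j]
      _ = 0 := by simp only [mul_sub, Finset.sum_sub_distrib, ha, hb, sub_zero]
  have hM : 0 < ∑ j, m j := Finset.sum_pos (fun j _ => hm j) ⟨i, Finset.mem_univ i⟩
  exact sub_eq_zero.mp ((mul_eq_zero.mp hsum).resolve_left hM.ne')

/-- The Newtonian collinear potential
`U(a) = ∑_{i<j} mᵢmⱼ/(aᵢ − aⱼ)` is strictly convex on the open convex chamber
`C₀ = {a : ∑ mᵢaᵢ = 0, a₁ > a₂ > ⋯ > aₙ}`. -/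
theorem stmt17 (n : ℕ) (hn : 2 ≤ n) (m : Fin n → ℝ) (hm : ∀ i, 0 < m i) :
    let C0 : Set (Fin n → ℝ) :=
      {a | (∑ i, m i * a i = 0) ∧ ∀ i j : Fin n, i < j → a j < a i}
    let U : (Fin n → ℝ) → ℝ := fun a =>
      ∑ p ∈ Finset.univ.filter (fun p : Fin n × Fin n => p.1 < p.2),
        m p.1 * m p.2 / (a p.1 - a p.2)
    StrictConvexOn ℝ C0 U := by
  intro C0 U
  refine ⟨?_, ?_⟩
  · rintro a ⟨ha, ha'⟩ b ⟨hb, hb'⟩ s t hs ht hst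
    refine ⟨?_, fun i j hij => ?_⟩
    · calc ∑ i, m i * (s • a + t • b) i
          = s * ∑ i, m i * a i + t * ∑ i, m i * b i := by
            rw [Finset.mul_sum, Finset.mul_sum, ← Finset.sum_add_distrib]
            refine Finset.sum_congr rfl fun i _ => ?_
            simp only [Pi.add_apply, Pi.smul_apply, smul_eq_mul]
            ring
        _ = 0 := by rw [ha, hb]; ring
    · simp only [Pi.add_apply, Pi.smul_apply, smul_eq_mul]
      have h1 := ha' i j hij
      have h2 := hb' i j hij
      rcases hs.eq_or_lt with rfl | hs
      · obtain rfl : t = 1 := by linarith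
        linarith
      · nlinarith [mul_lt_mul_of_pos_left h1 hs, mul_le_mul_of_nonneg_left h2.le ht]
  · rintro a ⟨ha, ha'⟩ b ⟨hb, hb'⟩ hab s t hs ht hst
    have e : ∀ p : Fin n × Fin n, (s • a + t • b) p.1 - (s • a + t • b) p.2
        = s * (a p.1 - a p.2) + t * (b p.1 - b p.2) := fun p => by
      simp only [Pi.add_apply, Pi.smul_apply, smul_eq_mul]
      ring
    have hlt : ∀ p : Fin n × Fin n, p.1 < p.2 → a p.1 - a p.2 ≠ b p.1 - b p.2 →
        m p.1 * m p.2 / (s * (a p.1 - a p.2) + t * (b p.1 - b p.2))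
          < s * (m p.1 * m p.2 / (a p.1 - a p.2)) + t * (m p.1 * m p.2 / (b p.1 - b p.2)) :=
      fun p hp hne => div_combo_lt (mul_pos (hm _) (hm _)) (sub_pos.mpr (ha' _ _ hp))
        (sub_pos.mpr (hb' _ _ hp)) hne hs ht hst
    simp only [U, smul_eq_mul, e]
    rw [Finset.mul_sum, Finset.mul_sum, ← Finset.sum_add_distrib]
    obtain ⟨i, j, hij, hne⟩ := exists_pair_diff_ne hm ha hb hab
    refine Finset.sum_lt_sum (fun p hp => ?_) ⟨(i, j), by simpa using hij, hlt (i, j) hij hne⟩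
    have hp' : p.1 < p.2 := (Finset.mem_filter.mp hp).2
    by_cases h : a p.1 - a p.2 = b p.1 - b p.2
    · rw [h, ← add_mul, ← add_mul, hst, one_mul, one_mul]
    · exact (hlt p hp' h).le
end

section
/- Let n ≥ 2 and m₁,…,mₙ > 0. On the set E = { a ∈ ℝⁿ : a₁ > a₂ > ⋯ > aₙ, Σᵢ mᵢaᵢ = 0, Σᵢ mᵢaᵢ² = 1 }, the Newtonian collinear potential U(a) = Σ_{i<j} mᵢm_j/(aᵢ − a_j) attains its infimum at exactly one point a* ∈ E, and a* is the unique point of E which is a collinear central configuration, i.e. the unique a ∈ E for which there exists λ ∈ ℝ with λ aᵢ = Σ_{j ≠ i} m_j (a_j − aᵢ)/|aᵢ − a_j|³ for all i = 1,…,n. -/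
/-!
Convexity of `x ↦ 1 / x` makes a central configuration the only minimizer of the potential, so that
everything reduces to the existence of one central configuration.

Write `⟨a, b⟩ = ∑ i, m i * a i * b i`. Pairing the central configuration equation at `a` with a
vector `v` gives `lam * ⟨a, v⟩ = -∑_{i<j} m i * m j * (v i - v j) / (a i - a j) ^ 2`
(`sum_force_mul`); `v = a` yields `lam = -U a`. For `b` in the chamber, the tangent line inequality
`1 / y ≥ 2 / x - y / x ^ 2` summed over pairs gives `U b ≥ 2 * U a - U a * ⟨a, b⟩`, and since
`⟨a, b⟩ = 1 - ⟨a - b, a - b⟩ / 2`, this reads `U b ≥ U a + U a * ⟨a - b, a - b⟩ / 2`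
(`central_gap`). Hence a central configuration is the strict global minimizer on the normalized
chamber.

For existence (`exists_critical`), the function `⟨a, a⟩ / 2 + U a` is minimized over the whole open
chamber: its sublevel sets are compact, and the critical point equations there say that `a` is
central with `lam = -1` and that its center of mass vanishes. Rescaling gives moment of inertia `1`.
-/

/-- The Newtonian potential of a collinear configuration. -/
noncomputable def colU {n : ℕ} (m a : Fin n → ℝ) : ℝ :=
  ∑ p ∈ Finset.univ.filter (fun p : Fin n × Fin n => p.1 < p.2),
    m p.1 * m p.2 / (a p.1 - a p.2)

/-- The acceleration of the `i`-th body. -/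
noncomputable def force {n : ℕ} (m a : Fin n → ℝ) (i : Fin n) : ℝ :=
  ∑ j ∈ Finset.univ.filter (fun j : Fin n => j ≠ i), m j * (a j - a i) / |a i - a j| ^ 3

lemma sum_pairs {n : ℕ} (f : Fin n → Fin n → ℝ) (hf : ∀ i, f i i = 0) :
    ∑ i, ∑ j, f i j =
      ∑ p ∈ Finset.univ.filter (fun p : Fin n × Fin n => p.1 < p.2),
        (f p.1 p.2 + f p.2 p.1) := by
  have h1 : ∑ i, ∑ j, f i j = ∑ p : Fin n × Fin n, f p.1 p.2 :=
    (Fintype.sum_prod_type (fun p : Fin n × Fin n => f p.1 p.2)).symm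
  have h2 : ∑ p : Fin n × Fin n, (if p.2 < p.1 then f p.1 p.2 else 0) =
      ∑ p : Fin n × Fin n, (if p.1 < p.2 then f p.2 p.1 else 0) :=
    Fintype.sum_equiv (Equiv.prodComm _ _) _ _ (fun p => rfl)
  rw [h1, Finset.sum_add_distrib, Finset.sum_filter, Finset.sum_filter, ← h2,
    ← Finset.sum_add_distrib]
  refine Finset.sum_congr rfl fun p _ => ?_
  rcases lt_trichotomy p.1 p.2 with h | h | h
  · simp [h, h.not_gt]
  · simp [h, hf]
  · simp [h, h.not_gt]

/-- Newton's third law: the internal forces on the two bodies of a pair are opposite, so the virtual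
work along `v` is a sum over pairs. -/
lemma sum_force_mul {n : ℕ} (m a v : Fin n → ℝ) (ha : ∀ i j : Fin n, i < j → a j < a i) :
    ∑ i, m i * v i * force m a i =
      -∑ p ∈ Finset.univ.filter (fun p : Fin n × Fin n => p.1 < p.2),
        m p.1 * m p.2 * (v p.1 - v p.2) / (a p.1 - a p.2) ^ 2 := by
  have h1 : ∀ i, m i * v i * force m a i =
      ∑ j, m i * v i * (m j * (a j - a i) / |a i - a j| ^ 3) := by
    intro i
    rw [force, Finset.sum_filter, Finset.mul_sum]
    refine Finset.sum_congr rfl fun j _ => ?_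
    by_cases h : j = i <;> simp [h]
  rw [Finset.sum_congr rfl fun i _ => h1 i, sum_pairs _ (by simp), ← Finset.sum_neg_distrib]
  refine Finset.sum_congr rfl fun p hp => ?_
  have hlt := sub_pos.2 (ha _ _ (Finset.mem_filter.1 hp).2)
  rw [abs_sub_comm (a p.2), abs_of_pos hlt]
  field_simp
  ring

lemma colU_pos {n : ℕ} (hn : 2 ≤ n) (m a : Fin n → ℝ) (hm : ∀ i, 0 < m i)
    (ha : ∀ i j : Fin n, i < j → a j < a i) : 0 < colU m a := by
  refine Finset.sum_pos (fun p hp => ?_) ⟨(⟨0, by omega⟩, ⟨1, by omega⟩), by simp⟩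
  exact div_pos (mul_pos (hm _) (hm _)) (sub_pos.2 (ha _ _ (Finset.mem_filter.1 hp).2))

lemma colU_term_le {n : ℕ} (m a : Fin n → ℝ) (hm : ∀ i, 0 < m i)
    (ha : ∀ i j : Fin n, i < j → a j < a i) (i j : Fin n) (hij : i < j) :
    m i * m j / (a i - a j) ≤ colU m a :=
  Finset.single_le_sum (s := Finset.univ.filter (fun p : Fin n × Fin n => p.1 < p.2))
    (f := fun p => m p.1 * m p.2 / (a p.1 - a p.2)) (a := (i, j))
    (fun p hp => (div_pos (mul_pos (hm _) (hm _))
      (sub_pos.2 (ha _ _ (Finset.mem_filter.1 hp).2))).le) (by simpa using hij)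

/-- A normalized central configuration minimizes the potential, with a quadratic gap. -/
lemma central_gap {n : ℕ} (m a b : Fin n → ℝ) (hm : ∀ i, 0 < m i)
    (ha : ∀ i j : Fin n, i < j → a j < a i) (hb : ∀ i j : Fin n, i < j → b j < b i)
    (ha1 : ∑ i, m i * a i ^ 2 = 1) (hb1 : ∑ i, m i * b i ^ 2 = 1)
    (lam : ℝ) (hc : ∀ i, lam * a i = force m a i) :
    colU m a + colU m a / 2 * ∑ i, m i * (a i - b i) ^ 2 ≤ colU m b := by
  have key : ∀ v : Fin n → ℝ, lam * ∑ i, m i * a i * v i =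
      -∑ p ∈ Finset.univ.filter (fun p : Fin n × Fin n => p.1 < p.2),
        m p.1 * m p.2 * (v p.1 - v p.2) / (a p.1 - a p.2) ^ 2 := by
    intro v
    rw [← sum_force_mul m a v ha, Finset.mul_sum]
    refine Finset.sum_congr rfl fun i _ => ?_
    rw [← hc]; ring
  have hlam : lam = -colU m a := by
    have h := key a
    have e : ∑ i, m i * a i * a i = 1 := by
      rw [← ha1]; exact Finset.sum_congr rfl fun i _ => by ring
    rw [e, mul_one] at h
    rw [h, colU]
    congr 1
    refine Finset.sum_congr rfl fun p hp => ?_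
    have hlt := sub_pos.2 (ha _ _ (Finset.mem_filter.1 hp).2)
    field_simp
  have htan : 2 * colU m a - ∑ p ∈ Finset.univ.filter (fun p : Fin n × Fin n => p.1 < p.2),
        m p.1 * m p.2 * (b p.1 - b p.2) / (a p.1 - a p.2) ^ 2 ≤ colU m b := by
    rw [colU, colU, Finset.mul_sum, ← Finset.sum_sub_distrib]
    refine Finset.sum_le_sum fun p hp => ?_
    have hx := sub_pos.2 (ha _ _ (Finset.mem_filter.1 hp).2)
    have hy := sub_pos.2 (hb _ _ (Finset.mem_filter.1 hp).2)
    have hmm := mul_pos (hm p.1) (hm p.2)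
    generalize a p.1 - a p.2 = x at *
    generalize b p.1 - b p.2 = y at *
    generalize m p.1 * m p.2 = c at *
    have : c / y - (2 * (c / x) - c * y / x ^ 2) = c * (x - y) ^ 2 / (y * x ^ 2) := by
      field_simp
      ring
    have h2 : 0 ≤ c * (x - y) ^ 2 / (y * x ^ 2) := by positivity
    linarith
  have hpol : ∑ i, m i * (a i - b i) ^ 2 = 2 - 2 * ∑ i, m i * a i * b i := by
    have : ∑ i, m i * (a i - b i) ^ 2 =
        ∑ i, m i * a i ^ 2 + ∑ i, m i * b i ^ 2 - 2 * ∑ i, m i * a i * b i := by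
      rw [Finset.mul_sum, ← Finset.sum_add_distrib, ← Finset.sum_sub_distrib]
      exact Finset.sum_congr rfl fun i _ => by ring
    rw [this, ha1, hb1]; ring
  have hk := key b
  rw [hlam] at hk
  rw [hpol]
  linarith

lemma central_unique {n : ℕ} (hn : 2 ≤ n) (m a b : Fin n → ℝ) (hm : ∀ i, 0 < m i)
    (ha : ∀ i j : Fin n, i < j → a j < a i) (hb : ∀ i j : Fin n, i < j → b j < b i)
    (ha1 : ∑ i, m i * a i ^ 2 = 1) (hb1 : ∑ i, m i * b i ^ 2 = 1)
    (lam : ℝ) (hc : ∀ i, lam * a i = force m a i) (hle : colU m b ≤ colU m a) : b = a := by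
  have hgap := central_gap m a b hm ha hb ha1 hb1 lam hc
  have hU := colU_pos hn m a hm ha
  have hnn : ∀ i ∈ Finset.univ, 0 ≤ m i * (a i - b i) ^ 2 :=
    fun i _ => mul_nonneg (hm i).le (sq_nonneg _)
  have h0 : ∑ i, m i * (a i - b i) ^ 2 = 0 := by
    refine le_antisymm ?_ (Finset.sum_nonneg hnn)
    by_contra! h
    have := mul_pos (half_pos hU) h
    linarith
  funext i
  have hi := (Finset.sum_eq_zero_iff_of_nonneg hnn).1 h0 i (Finset.mem_univ i)
  have h3 : a i - b i = 0 := by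
    rcases mul_eq_zero.1 hi with h | h
    · exact absurd h (hm i).ne'
    · exact pow_eq_zero_iff (two_ne_zero) |>.1 h
  linarith

/-- Half the moment of inertia plus the potential; its critical points in the chamber are the
central configurations with multiplier `-1`. -/
noncomputable def colG {n : ℕ} (m a : Fin n → ℝ) : ℝ :=
  ∑ i, m i * a i ^ 2 / 2 + colU m a

/-- The sublevel set of `colG` through any point of the chamber is bounded and stays away from
collisions, so `colG` attains its minimum. -/
lemma exists_min {n : ℕ} (hn : 2 ≤ n) (m : Fin n → ℝ) (hm : ∀ i, 0 < m i) :
    ∃ a : Fin n → ℝ, (∀ i j : Fin n, i < j → a j < a i) ∧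
      ∀ b : Fin n → ℝ, (∀ i j : Fin n, i < j → b j < b i) → colG m a ≤ colG m b := by
  let a0 : Fin n → ℝ := fun i => -((i : ℕ) : ℝ)
  have ha0 : ∀ i j : Fin n, i < j → a0 j < a0 i := by
    intro i j hij
    exact neg_lt_neg (by exact_mod_cast hij)
  have hI : ∀ a : Fin n → ℝ, 0 ≤ ∑ i, m i * a i ^ 2 / 2 := fun a =>
    Finset.sum_nonneg fun i _ => by have := hm i; positivity
  obtain ⟨C, hC⟩ : ∃ C, C = colG m a0 := ⟨_, rfl⟩
  have hCpos : 0 < C := by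
    rw [hC]; exact add_pos_of_nonneg_of_pos (hI a0) (colU_pos hn m a0 hm ha0)
  let K : Set (Fin n → ℝ) :=
    {a | (∀ i j : Fin n, i < j → m i * m j / C ≤ a i - a j) ∧ ∑ i, m i * a i ^ 2 / 2 ≤ C}
  have hKch : ∀ a ∈ K, ∀ i j : Fin n, i < j → a j < a i := fun a h i j hij => by
    have h1 := h.1 i j hij
    have h2 := div_pos (mul_pos (hm i) (hm j)) hCpos
    linarith
  have hKmem : ∀ b : Fin n → ℝ, (∀ i j : Fin n, i < j → b j < b i) → colG m b ≤ C → b ∈ K := by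
    intro b hb hle
    have hUb := colU_pos hn m b hm hb
    have hIb := hI b
    rw [colG] at hle
    refine ⟨fun i j hij => ?_, by linarith⟩
    have h1 := colU_term_le m b hm hb i j hij
    have hpos := sub_pos.2 (hb i j hij)
    rw [div_le_iff₀ hCpos]
    have h2 : m i * m j / (b i - b j) ≤ C := by linarith
    rw [div_le_iff₀ hpos] at h2
    linarith
  have hclosed : IsClosed K := by
    refine IsClosed.inter (s₁ := {a : Fin n → ℝ | ∀ i j, i < j → m i * m j / C ≤ a i - a j})
      (s₂ := {a : Fin n → ℝ | ∑ i, m i * a i ^ 2 / 2 ≤ C}) ?_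
      (isClosed_le (by fun_prop) (by fun_prop))
    simp only [Set.ofPred_forall]
    exact isClosed_iInter fun i => isClosed_iInter fun j => isClosed_iInter fun _ =>
      isClosed_le (by fun_prop) (by fun_prop)
  have hcomp : IsCompact K := by
    refine IsCompact.of_isClosed_subset
      (isCompact_univ_pi fun i => isCompact_Icc (a := -(2 * C / m i + 1)) (b := 2 * C / m i + 1))
      hclosed ?_
    intro a ha i _
    have h1 : m i * a i ^ 2 / 2 ≤ C := le_trans
      (Finset.single_le_sum (f := fun i => m i * a i ^ 2 / 2)
        (fun i _ => by have := hm i; positivity) (Finset.mem_univ i)) ha.2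
    have h2 : a i ^ 2 ≤ 2 * C / m i := by
      rw [le_div_iff₀ (hm i)]; linarith
    constructor <;> nlinarith [sq_nonneg (a i - 1), sq_nonneg (a i + 1), sq_nonneg (a i)]
  have hcont : ContinuousOn (colG m) K := by
    refine ContinuousOn.add (Continuous.continuousOn (by fun_prop)) ?_
    refine continuousOn_finsetSum _ fun p hp => ?_
    refine ContinuousOn.div (by fun_prop) (by fun_prop) fun a ha => ?_
    exact (sub_pos.2 (hKch a ha _ _ (Finset.mem_filter.1 hp).2)).ne'
  obtain ⟨a, haK, hmin⟩ := hcomp.exists_isMinOn ⟨a0, hKmem a0 ha0 hC.ge⟩ hcont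
  refine ⟨a, hKch a haK, fun b hb => ?_⟩
  by_cases h : colG m b ≤ C
  · exact hmin (hKmem b hb h)
  · have h1 : colG m a ≤ colG m a0 := hmin (hKmem a0 ha0 hC.ge)
    linarith

/-- A minimizer of `colG` on the open chamber is a critical point: testing its first variation along
coordinate vectors gives the central configuration equation, and along `1` the center of mass. -/
lemma exists_critical {n : ℕ} (hn : 2 ≤ n) (m : Fin n → ℝ) (hm : ∀ i, 0 < m i) :
    ∃ a : Fin n → ℝ, (∀ i j : Fin n, i < j → a j < a i) ∧ ∑ i, m i * a i = 0 ∧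
      ∀ i, force m a i = -a i := by
  obtain ⟨a, ha, hmin⟩ := exists_min hn m hm
  have hvar : ∀ v : Fin n → ℝ, ∑ i, m i * v i * (a i + force m a i) = 0 := by
    intro v
    have hopen : ∀ᶠ t : ℝ in nhds 0, ∀ i j : Fin n, i < j → a j + t * v j < a i + t * v i := by
      simp only [Filter.eventually_all]
      intro i j hij
      exact ContinuousAt.eventually_lt (f := fun t : ℝ => a j + t * v j)
        (g := fun t : ℝ => a i + t * v i) (by fun_prop) (by fun_prop) (by simpa using ha i j hij)
    have hloc : IsLocalMin (fun t : ℝ => colG m (fun i => a i + t * v i)) 0 := by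
      filter_upwards [hopen] with t ht
      simpa using hmin _ ht
    have hlin : ∀ i, HasDerivAt (fun t : ℝ => a i + t * v i) (v i) 0 := fun i => by
      simpa using ((hasDerivAt_id (0 : ℝ)).mul_const (v i)).const_add (a i)
    have hder : HasDerivAt (fun t : ℝ => colG m (fun i => a i + t * v i))
        (∑ i, m i * v i * a i +
          ∑ p ∈ Finset.univ.filter (fun p : Fin n × Fin n => p.1 < p.2),
            -(m p.1 * m p.2 * (v p.1 - v p.2) / (a p.1 - a p.2) ^ 2)) 0 := by
      refine HasDerivAt.add (HasDerivAt.fun_sum fun i _ => ?_) (HasDerivAt.fun_sum fun p hp => ?_)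
      · refine ((((hlin i).pow 2).const_mul (m i)).div_const 2).congr_deriv ?_
        simp; ring
      · have hlt := sub_pos.2 (ha _ _ (Finset.mem_filter.1 hp).2)
        refine ((hasDerivAt_const (0 : ℝ) (m p.1 * m p.2)).div ((hlin p.1).sub (hlin p.2))
          (by simpa using hlt.ne')).congr_deriv ?_
        simp; ring
    have h0 := hloc.hasDerivAt_eq_zero hder
    rw [Finset.sum_neg_distrib, ← sum_force_mul m a v ha, ← Finset.sum_add_distrib] at h0
    rw [← h0]
    exact Finset.sum_congr rfl fun i _ => by ring
  have hcrit : ∀ i, force m a i = -a i := by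
    intro k
    have h := hvar (Pi.single k 1)
    rw [Finset.sum_eq_single k (fun i _ hi => by simp [hi]) (by simp)] at h
    have h1 : a k + force m a k = 0 := by
      simpa [(hm k).ne'] using h
    linarith
  refine ⟨a, ha, ?_, hcrit⟩
  -- The internal forces on all bodies, weighted by mass, add up to zero.
  have h := sum_force_mul m a (fun _ => 1) ha
  simp [hcrit] at h
  exact h

lemma force_smul {n : ℕ} (m a : Fin n → ℝ) (s : ℝ) (hs : 0 < s) (i : Fin n) :
    force m (fun k => s * a k) i = s⁻¹ ^ 2 * force m a i := by
  rw [force, force, Finset.mul_sum]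
  refine Finset.sum_congr rfl fun j _ => ?_
  rw [← mul_sub, ← mul_sub, abs_mul, abs_of_pos hs, mul_pow]
  by_cases h : |a i - a j| = 0
  · simp [h]
  · field_simp

lemma exists_central {n : ℕ} (hn : 2 ≤ n) (m : Fin n → ℝ) (hm : ∀ i, 0 < m i) :
    ∃ a : Fin n → ℝ, (∀ i j : Fin n, i < j → a j < a i) ∧ ∑ i, m i * a i = 0 ∧
      ∑ i, m i * a i ^ 2 = 1 ∧ ∃ lam : ℝ, ∀ i, lam * a i = force m a i := by
  obtain ⟨a, ha, hcm, hcrit⟩ := exists_critical hn m hm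
  have hnn : ∀ i ∈ Finset.univ, 0 ≤ m i * a i ^ 2 :=
    fun i _ => mul_nonneg (hm i).le (sq_nonneg _)
  have hI : 0 < ∑ i, m i * a i ^ 2 := by
    refine lt_of_le_of_ne (Finset.sum_nonneg hnn) fun h => ?_
    have hz : ∀ i, a i = 0 := fun i => by
      have := (Finset.sum_eq_zero_iff_of_nonneg hnn).1 h.symm i (Finset.mem_univ i)
      simpa [(hm i).ne'] using this
    have := ha ⟨0, by omega⟩ ⟨1, by omega⟩ (by simp)
    simp [hz] at this
  obtain ⟨I, hIdef⟩ : ∃ I, I = ∑ i, m i * a i ^ 2 := ⟨_, rfl⟩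
  rw [← hIdef] at hI
  have hr := Real.sqrt_pos.2 hI
  have hs : 0 < (√I)⁻¹ := inv_pos.2 hr
  refine ⟨fun i => (√I)⁻¹ * a i, fun i j hij => mul_lt_mul_of_pos_left (ha i j hij) hs, ?_, ?_,
    -(√I) ^ 3, fun i => ?_⟩
  · have : ∑ i, m i * ((√I)⁻¹ * a i) = (√I)⁻¹ * ∑ i, m i * a i := by
      rw [Finset.mul_sum]; exact Finset.sum_congr rfl fun i _ => by ring
    rw [this, hcm, mul_zero]
  · have : ∑ i, m i * ((√I)⁻¹ * a i) ^ 2 = ((√I) ^ 2)⁻¹ * ∑ i, m i * a i ^ 2 := by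
      rw [Finset.mul_sum]; exact Finset.sum_congr rfl fun i _ => by ring
    rw [this, ← hIdef, Real.sq_sqrt hI.le, inv_mul_cancel₀ hI.ne']
  · rw [force_smul m a _ hs, hcrit]
    field_simp


/-- On the normalized chamber `E` (decreasing positions, center of mass `0`,
moment of inertia `1`), the Newtonian collinear potential attains its infimum at exactly
one point, and this minimizer is the unique collinear central configuration in `E`. -/
theorem stmt18 (n : ℕ) (hn : 2 ≤ n) (m : Fin n → ℝ) (hm : ∀ i, 0 < m i) :
    let E : Set (Fin n → ℝ) :=
      {a | (∀ i j : Fin n, i < j → a j < a i) ∧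
        (∑ i, m i * a i = 0) ∧ (∑ i, m i * a i ^ 2 = 1)}
    let U : (Fin n → ℝ) → ℝ := fun a =>
      ∑ p ∈ Finset.univ.filter (fun p : Fin n × Fin n => p.1 < p.2),
        m p.1 * m p.2 / (a p.1 - a p.2)
    let central : (Fin n → ℝ) → Prop := fun a => ∃ lam : ℝ, ∀ i,
      lam * a i = ∑ j ∈ Finset.univ.filter (fun j : Fin n => j ≠ i),
        m j * (a j - a i) / |a i - a j| ^ 3
    ∃ astar ∈ E,
      (∀ b ∈ E, U astar ≤ U b) ∧
      (∀ b ∈ E, (∀ c ∈ E, U b ≤ U c) → b = astar) ∧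
      central astar ∧
      (∀ b ∈ E, central b → b = astar) := by
  intro E U central
  obtain ⟨a, ha, ha0, ha1, lam, hc⟩ := exists_central hn m hm
  have huniq : ∀ b ∈ E, U b ≤ U a → b = a := fun b hb hle =>
    central_unique hn m a b hm ha hb.1 ha1 hb.2.2 lam hc hle
  have hmin : ∀ b ∈ E, U a ≤ U b := fun b hb => by
    by_contra! h
    rw [huniq b hb h.le] at h
    exact lt_irrefl _ h
  refine ⟨a, ⟨ha, ha0, ha1⟩, hmin, fun b hb hbmin => huniq b hb (hbmin a ⟨ha, ha0, ha1⟩),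
    ⟨lam, hc⟩, ?_⟩
  rintro b hb ⟨mu, hmu⟩
  exact (central_unique hn m b a hm hb.1 ha hb.2.2 ha1 mu hmu (hmin b hb)).symm
end

section
/- (Moulton) Let n ≥ 2 and m₁,…,mₙ > 0. Let Z = { a = (a₁,…,aₙ) ∈ ℝⁿ : the aᵢ are pairwise distinct, Σᵢ mᵢaᵢ = 0, Σᵢ mᵢaᵢ² = 1, and there exists λ ∈ ℝ with λ aᵢ = Σ_{j ≠ i} m_j (a_j − aᵢ)/|aᵢ − a_j|³ for all i } be the set of normalized collinear central configurations. Then for each permutation σ of {1,…,n} there is exactly one element a ∈ Z with a_{σ(1)} > a_{σ(2)} > ⋯ > a_{σ(n)}; hence Z has exactly n! elements. Moreover a ↦ −a is a fixed-point-free involution of Z, so the number of collinear central configurations up to this reflection is n!/2. -/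
/-!
Put `g x = x / |x|³`. On the open convex cone of configurations with a prescribed ordering, the
energy `F a = ∑ mᵢ aᵢ² + ∑ᵢ ∑ⱼ mᵢ mⱼ / |aᵢ - aⱼ|` is proper and strictly convex, and its critical
points are the solutions of `aᵢ = ∑ⱼ mⱼ g (aᵢ - aⱼ)`, i.e. the central configurations with
`λ = -1`.

* Existence (`Moulton.exists_equilibrium`): a sublevel set of `F` lies in a compact subset of the
  cone, so `F` has a minimizer, where the directional derivatives vanish.
* Uniqueness (`Moulton.equilibrium_unique`): `g` is decreasing on each half-line, so pairing the
  difference of two equilibrium equations with the difference of the solutions forces equality.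

Both use the symmetrization identity `Moulton.sum_antisymm`. A normalized central configuration
has `λ < 0` (pair its equation with `mᵢ aᵢ`), so by homogeneity it is a unique positive rescaling
of an equilibrium; the centre of mass of an equilibrium vanishes automatically. The count `n!`
follows because each injective configuration has exactly one decreasing ordering.
-/

namespace Moulton

/-- The signed inverse-square law `x / |x|³`; the junk value `g 0 = 0` makes self-interaction terms
vanish, so sums over `j ≠ i` can be replaced by sums over all `j`. -/
noncomputable def g (x : ℝ) : ℝ := x / |x| ^ 3

lemma g_neg (x : ℝ) : g (-x) = - g x := by
  simp [g, neg_div]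

lemma g_mul_self (x : ℝ) : g x * x = |x|⁻¹ := by
  rcases eq_or_ne x 0 with rfl | hx
  · simp
  · have : |x| ≠ 0 := abs_ne_zero.mpr hx
    unfold g
    field_simp
    exact (sq_abs x).symm

lemma g_smul {s : ℝ} (hs : 0 < s) (x : ℝ) : s ^ 2 * g (s * x) = g x := by
  unfold g
  rw [abs_mul, abs_of_pos hs]
  rcases eq_or_ne x 0 with rfl | hx
  · simp
  · have : |x| ≠ 0 := abs_ne_zero.mpr hx
    field_simp

lemma g_anti_pos {x y : ℝ} (hx : 0 < x) (hy : 0 < y) : (x - y) * (g x - g y) ≤ 0 := by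
  unfold g
  rw [abs_of_pos hx, abs_of_pos hy]
  have h : (x - y) * (x / x ^ 3 - y / y ^ 3) = - ((x - y) ^ 2 * (x + y) / (x ^ 2 * y ^ 2)) := by
    field_simp
    ring
  rw [h]
  have : 0 ≤ (x - y) ^ 2 * (x + y) / (x ^ 2 * y ^ 2) := by positivity
  linarith

lemma hasDerivAt_abs_inv {x : ℝ} (hx : x ≠ 0) :
    HasDerivAt (fun t : ℝ => |t|⁻¹) (- g x) x := by
  have h0 : |x| ≠ 0 := abs_ne_zero.mpr hx
  rcases lt_or_gt_of_ne hx with h | h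
  · have := (hasDerivAt_abs_neg h).fun_inv h0
    refine this.congr_deriv ?_
    unfold g
    rw [abs_of_neg h]
    field_simp
  · have := (hasDerivAt_abs_pos h).fun_inv h0
    refine this.congr_deriv ?_
    unfold g
    rw [abs_of_pos h]
    field_simp

variable {n : ℕ}

/-- `Moulton.Ordered p a` says that `a` decreases along the positions `p`. -/
def Ordered (p : Equiv.Perm (Fin n)) (a : Fin n → ℝ) : Prop :=
  ∀ i j, p i < p j → a j < a i

lemma Ordered.ne {p : Equiv.Perm (Fin n)} {a : Fin n → ℝ} (ha : Ordered p a) {i j : Fin n}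
    (hij : i ≠ j) : a i ≠ a j := by
  rcases lt_or_gt_of_ne (p.injective.ne hij) with h | h
  · exact (ha _ _ h).ne'
  · exact (ha _ _ h).ne

lemma Ordered.anti {p : Equiv.Perm (Fin n)} {a b : Fin n → ℝ} (ha : Ordered p a)
    (hb : Ordered p b) (i j : Fin n) :
    ((a i - a j) - (b i - b j)) * (g (a i - a j) - g (b i - b j)) ≤ 0 := by
  rcases eq_or_ne i j with rfl | hij
  · simp
  rcases lt_or_gt_of_ne (p.injective.ne hij) with h | h
  · exact g_anti_pos (sub_pos.mpr (ha _ _ h)) (sub_pos.mpr (hb _ _ h))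
  · have := g_anti_pos (sub_pos.mpr (ha _ _ h)) (sub_pos.mpr (hb _ _ h))
    rw [← neg_sub (a j) (a i), ← neg_sub (b j) (b i), g_neg, g_neg]
    linarith

/-- Action equals reaction, summed: an antisymmetric pair interaction tested against `v` only sees the
differences `v i - v j`. -/
lemma sum_antisymm (m v : Fin n → ℝ) (h : Fin n → Fin n → ℝ) (hh : ∀ i j, h j i = - h i j) :
    ∑ i, ∑ j, m i * m j * (h i j * (v i - v j)) = 2 * ∑ i, m i * v i * ∑ j, m j * h i j := by
  have h1 : ∑ i, ∑ j, m i * m j * (h i j * v j) = - ∑ i, ∑ j, m i * m j * (h i j * v i) := by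
    rw [Finset.sum_comm, ← Finset.sum_neg_distrib]
    refine Finset.sum_congr rfl fun i _ => ?_
    rw [← Finset.sum_neg_distrib]
    refine Finset.sum_congr rfl fun j _ => ?_
    rw [hh i j]
    ring
  have h2 : ∑ i, m i * v i * ∑ j, m j * h i j = ∑ i, ∑ j, m i * m j * (h i j * v i) := by
    refine Finset.sum_congr rfl fun i _ => ?_
    rw [Finset.mul_sum]
    exact Finset.sum_congr rfl fun j _ => by ring
  simp only [mul_sub, Finset.sum_sub_distrib]
  rw [h1, h2]
  ring

/-- The central configuration equation with `λ = -1`. -/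
def Equilibrium (m a : Fin n → ℝ) : Prop := ∀ i, a i = ∑ j, m j * g (a i - a j)

lemma equilibrium_unique {m : Fin n → ℝ} (hm : ∀ i, 0 < m i) {p : Equiv.Perm (Fin n)}
    {a b : Fin n → ℝ} (ha : Ordered p a) (hb : Ordered p b)
    (ea : Equilibrium m a) (eb : Equilibrium m b) : a = b := by
  have key := sum_antisymm m (fun i => a i - b i) (fun i j => g (a i - a j) - g (b i - b j))
    (fun i j => by rw [← neg_sub (a i), ← neg_sub (b i), g_neg, g_neg]; ring)
  have h1 : ∀ i, ∑ j, m j * (g (a i - a j) - g (b i - b j)) = a i - b i := fun i => by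
    simp only [mul_sub, Finset.sum_sub_distrib]
    rw [← ea i, ← eb i]
  simp only [h1] at key
  have h2 : ∑ i, ∑ j, m i * m j *
      ((g (a i - a j) - g (b i - b j)) * (a i - b i - (a j - b j))) ≤ 0 := by
    refine Finset.sum_nonpos fun i _ => Finset.sum_nonpos fun j _ => ?_
    refine mul_nonpos_of_nonneg_of_nonpos (mul_pos (hm i) (hm j)).le ?_
    have := ha.anti hb i j
    linarith
  have h3 : ∀ i ∈ Finset.univ, 0 ≤ m i * (a i - b i) * (a i - b i) := fun i _ => by
    rw [mul_assoc]
    exact mul_nonneg (hm i).le (mul_self_nonneg _)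
  have h4 : ∑ i, m i * (a i - b i) * (a i - b i) = 0 :=
    le_antisymm (by linarith) (Finset.sum_nonneg h3)
  funext i
  have h5 := (Finset.sum_eq_zero_iff_of_nonneg h3).mp h4 i (Finset.mem_univ i)
  have := (hm i).ne'
  have h6 : a i - b i = 0 := by simpa [this] using h5
  linarith

/-- Twice the sum of half the moment of inertia and the Newtonian potential. -/
noncomputable def F (m a : Fin n → ℝ) : ℝ :=
  ∑ i, m i * a i ^ 2 + ∑ i, ∑ j, m i * m j * |a i - a j|⁻¹

lemma inertia_term_le {m : Fin n → ℝ} (hm : ∀ i, 0 < m i) (a : Fin n → ℝ) (i : Fin n) :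
    m i * a i ^ 2 ≤ F m a := by
  have h1 : m i * a i ^ 2 ≤ ∑ i, m i * a i ^ 2 :=
    Finset.single_le_sum (f := fun i => m i * a i ^ 2)
      (fun i _ => mul_nonneg (hm i).le (sq_nonneg _)) (Finset.mem_univ i)
  have h2 : 0 ≤ ∑ i, ∑ j, m i * m j * |a i - a j|⁻¹ :=
    Finset.sum_nonneg fun i _ => Finset.sum_nonneg fun j _ =>
      mul_nonneg (mul_pos (hm i) (hm j)).le (by positivity)
  unfold F
  linarith

lemma potential_term_le {m : Fin n → ℝ} (hm : ∀ i, 0 < m i) (a : Fin n → ℝ) (i j : Fin n) :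
    m i * m j * |a i - a j|⁻¹ ≤ F m a := by
  have h0 : ∀ i j, 0 ≤ m i * m j * |a i - a j|⁻¹ := fun i j =>
    mul_nonneg (mul_pos (hm i) (hm j)).le (by positivity)
  have h1 : 0 ≤ ∑ i, m i * a i ^ 2 :=
    Finset.sum_nonneg fun i _ => mul_nonneg (hm i).le (sq_nonneg _)
  have h2 : m i * m j * |a i - a j|⁻¹ ≤ ∑ j, m i * m j * |a i - a j|⁻¹ :=
    Finset.single_le_sum (f := fun j => m i * m j * |a i - a j|⁻¹)
      (fun j _ => h0 i j) (Finset.mem_univ j)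
  have h3 : ∑ j, m i * m j * |a i - a j|⁻¹ ≤ ∑ i, ∑ j, m i * m j * |a i - a j|⁻¹ :=
    Finset.single_le_sum (f := fun i => ∑ j, m i * m j * |a i - a j|⁻¹)
      (fun i _ => Finset.sum_nonneg fun j _ => h0 i j) (Finset.mem_univ i)
  unfold F
  linarith

lemma exists_min {m : Fin n → ℝ} (hm : ∀ i, 0 < m i) (p : Equiv.Perm (Fin n)) :
    ∃ a, Ordered p a ∧ ∀ b, Ordered p b → F m a ≤ F m b := by
  let a₀ : Fin n → ℝ := fun i => - ((p i : ℕ) : ℝ)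
  have h₀ : Ordered p a₀ := fun i j hij => by
    have : (p i : ℕ) < (p j : ℕ) := hij
    simpa [a₀] using this
  obtain ⟨M, hM0, hM⟩ : ∃ M : ℝ, 0 < M ∧ F m a₀ ≤ M :=
    ⟨|F m a₀| + 1, by positivity, by linarith [le_abs_self (F m a₀)]⟩
  -- a compact part of the cone that contains the sublevel set `F ≤ M`
  let K : Set (Fin n → ℝ) := {a | (∀ i, m i * a i ^ 2 ≤ M) ∧
    ∀ i j, p i < p j → m i * m j / M ≤ a i - a j}
  have hKord : ∀ a ∈ K, Ordered p a := fun a ha i j hij => by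
    have h1 := ha.2 i j hij
    have h2 : 0 < m i * m j / M := div_pos (mul_pos (hm i) (hm j)) hM0
    linarith
  have hsub : ∀ a, Ordered p a → F m a ≤ M → a ∈ K := fun a ha haM => by
    refine ⟨fun i => (inertia_term_le hm a i).trans haM, fun i j hij => ?_⟩
    have h1 := (potential_term_le hm a i j).trans haM
    have h2 : 0 < a i - a j := sub_pos.mpr (ha i j hij)
    rw [abs_of_pos h2, ← div_eq_mul_inv, div_le_iff₀ h2] at h1
    rw [div_le_iff₀ hM0]
    linarith
  have hKclosed : IsClosed K := by
    have hK : K = (⋂ i, {a | m i * a i ^ 2 ≤ M}) ∩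
        ⋂ i, ⋂ j, ⋂ (_ : p i < p j), {a | m i * m j / M ≤ a i - a j} := by
      ext a
      simp [K]
    rw [hK]
    refine IsClosed.inter (isClosed_iInter fun i => isClosed_le (by fun_prop) (by fun_prop)) ?_
    exact isClosed_iInter fun i => isClosed_iInter fun j => isClosed_iInter fun _ =>
      isClosed_le (by fun_prop) (by fun_prop)
  have hKcomp : IsCompact K := by
    refine IsCompact.of_isClosed_subset (isCompact_univ_pi fun i =>
      isCompact_Icc (a := -(M / m i + 1)) (b := M / m i + 1)) hKclosed ?_
    intro a ha i _
    have h1 : a i ^ 2 ≤ M / m i := by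
      rw [le_div_iff₀ (hm i)]
      linarith [ha.1 i]
    have h2 : |a i| ≤ M / m i + 1 := by
      rw [← sq_abs] at h1
      nlinarith [sq_nonneg (|a i| - 1), abs_nonneg (a i)]
    exact abs_le.mp h2
  have hcont : ContinuousOn (F m) K := by
    unfold F
    refine ContinuousOn.add (by fun_prop) ?_
    refine continuousOn_finsetSum _ fun i _ => continuousOn_finsetSum _ fun j _ => ?_
    rcases eq_or_ne i j with rfl | hij
    · simp only [sub_self]
      exact continuousOn_const
    · refine continuousOn_const.mul (ContinuousOn.inv₀ (by fun_prop) fun a ha => ?_)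
      exact abs_ne_zero.mpr (sub_ne_zero.mpr ((hKord a ha).ne hij))
  obtain ⟨a, haK, hmin⟩ := hKcomp.exists_isMinOn ⟨a₀, hsub a₀ h₀ hM⟩ hcont
  refine ⟨a, hKord a haK, fun b hb => ?_⟩
  by_cases hbM : F m b ≤ M
  · exact hmin (hsub b hb hbM)
  · exact (hmin (hsub a₀ h₀ hM)).trans (hM.trans (not_le.mp hbM).le)

lemma hasDerivAt_F (m : Fin n → ℝ) {p : Equiv.Perm (Fin n)} {a : Fin n → ℝ} (ha : Ordered p a)
    (v : Fin n → ℝ) :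
    HasDerivAt (fun t : ℝ => F m (fun i => a i + t * v i))
      (2 * ∑ i, m i * v i * (a i - ∑ j, m j * g (a i - a j))) 0 := by
  have hlin : ∀ i, HasDerivAt (fun t : ℝ => a i + t * v i) (v i) 0 := fun i => by
    simpa using ((hasDerivAt_id (0 : ℝ)).mul_const (v i)).const_add (a i)
  have h1 : HasDerivAt (fun t : ℝ => ∑ i, m i * (a i + t * v i) ^ 2)
      (∑ i, m i * (2 * a i * v i)) 0 := by
    refine HasDerivAt.fun_sum fun i _ => ?_
    simpa using ((hlin i).fun_pow 2).const_mul (m i)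
  have h2 : HasDerivAt
      (fun t : ℝ => ∑ i, ∑ j, m i * m j * |(a i + t * v i) - (a j + t * v j)|⁻¹)
      (∑ i, ∑ j, m i * m j * (- g (a i - a j) * (v i - v j))) 0 := by
    refine HasDerivAt.fun_sum fun i _ => HasDerivAt.fun_sum fun j _ => ?_
    refine HasDerivAt.const_mul (m i * m j) ?_
    rcases eq_or_ne i j with rfl | hij
    · simpa using hasDerivAt_const (0 : ℝ) (0 : ℝ)
    · have h3 := (hlin i).fun_sub (hlin j)
      have h4 : HasDerivAt (fun t : ℝ => |t|⁻¹) (- g (a i - a j))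
          ((a i + 0 * v i) - (a j + 0 * v j)) := by
        simpa using hasDerivAt_abs_inv (sub_ne_zero.mpr (ha.ne hij))
      exact HasDerivAt.comp (h₂ := fun t : ℝ => |t|⁻¹) (0 : ℝ) h4 h3
  have h5 := h1.fun_add h2
  rw [sum_antisymm m v (fun i j => - g (a i - a j))
    (fun i j => by rw [← neg_sub (a i), g_neg])] at h5
  refine h5.congr_deriv ?_
  rw [Finset.mul_sum, Finset.mul_sum, ← Finset.sum_add_distrib]
  refine Finset.sum_congr rfl fun i _ => ?_
  simp only [mul_neg, Finset.sum_neg_distrib]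
  ring

lemma exists_equilibrium {m : Fin n → ℝ} (hm : ∀ i, 0 < m i) (p : Equiv.Perm (Fin n)) :
    ∃ a, Ordered p a ∧ Equilibrium m a := by
  obtain ⟨a, ha, hmin⟩ := exists_min hm p
  refine ⟨a, ha, ?_⟩
  -- differentiate in the direction of the defect, so that the derivative is `2 ∑ mᵢ vᵢ²`
  let v : Fin n → ℝ := fun i => a i - ∑ j, m j * g (a i - a j)
  have hev : ∀ᶠ t in nhds (0 : ℝ), Ordered p (fun i => a i + t * v i) := by
    unfold Ordered
    simp only [Filter.eventually_all]
    intro i j hij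
    have hc : ∀ k, ContinuousAt (fun t : ℝ => a k + t * v k) 0 := fun k => by fun_prop
    exact (hc j).eventually_lt (hc i) (by simpa using ha i j hij)
  have hloc : IsLocalMin (fun t : ℝ => F m (fun i => a i + t * v i)) 0 := by
    filter_upwards [hev] with t ht
    simpa using hmin _ ht
  have hz := hloc.hasDerivAt_eq_zero (hasDerivAt_F m ha v)
  have h3 : ∀ i ∈ Finset.univ, 0 ≤ m i * v i * v i := fun i _ => by
    rw [mul_assoc]
    exact mul_nonneg (hm i).le (mul_self_nonneg _)
  have h4 : ∑ i, m i * v i * v i = 0 := by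
    have : 2 * ∑ i, m i * v i * v i = 0 := hz
    linarith
  intro i
  have h5 := (Finset.sum_eq_zero_iff_of_nonneg h3).mp h4 i (Finset.mem_univ i)
  have := (hm i).ne'
  have h6 : v i = 0 := by simpa [this] using h5
  exact sub_eq_zero.mp h6

lemma force_eq (m a : Fin n → ℝ) (i : Fin n) :
    ∑ j ∈ Finset.univ.filter (fun j : Fin n => j ≠ i), m j * (a j - a i) / |a i - a j| ^ 3 =
      - ∑ j, m j * g (a i - a j) := by
  rw [Finset.sum_filter, ← Finset.sum_neg_distrib]
  refine Finset.sum_congr rfl fun j _ => ?_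
  rcases eq_or_ne j i with rfl | hij
  · simp [g]
  · rw [if_pos hij, g]
    ring

/-- Virial identity: twice this sum is `∑ᵢ ∑ⱼ mᵢ mⱼ / |aᵢ - aⱼ|` (without the diagonal), hence
positive. It is the source of `λ < 0`. -/
lemma virial_pos (hn : 2 ≤ n) {m : Fin n → ℝ} (hm : ∀ i, 0 < m i) {a : Fin n → ℝ}
    (ha : Function.Injective a) : 0 < ∑ i, m i * a i * ∑ j, m j * g (a i - a j) := by
  have h := sum_antisymm m a (fun i j => g (a i - a j))
    (fun i j => by rw [← neg_sub (a i), g_neg])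
  have h0 : ∀ i j, 0 ≤ m i * m j * (g (a i - a j) * (a i - a j)) := fun i j => by
    rw [g_mul_self]
    exact mul_nonneg (mul_pos (hm i) (hm j)).le (by positivity)
  have hpos : 0 < ∑ i, ∑ j, m i * m j * (g (a i - a j) * (a i - a j)) := by
    let i₀ : Fin n := ⟨0, by omega⟩
    let i₁ : Fin n := ⟨1, by omega⟩
    refine Finset.sum_pos' (fun i _ => Finset.sum_nonneg fun j _ => h0 i j)
      ⟨i₀, Finset.mem_univ _, Finset.sum_pos' (fun j _ => h0 i₀ j) ⟨i₁, Finset.mem_univ _, ?_⟩⟩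
    rw [g_mul_self]
    have hne : a i₀ ≠ a i₁ := ha.ne (by simp [i₀, i₁])
    exact mul_pos (mul_pos (hm _) (hm _)) (inv_pos.mpr (abs_pos.mpr (sub_ne_zero.mpr hne)))
  linarith

/-- The normalized central configurations; `mu` is `-λ`, and distinctness of the positions is kept
as a separate hypothesis. -/
def Central (m a : Fin n → ℝ) : Prop :=
  ∑ i, m i * a i = 0 ∧ ∑ i, m i * a i ^ 2 = 1 ∧ ∃ mu : ℝ, ∀ i, mu * a i = ∑ j, m j * g (a i - a j)

/-- A normalized central configuration is a positive multiple of an equilibrium. -/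
lemma Central.rescale (hn : 2 ≤ n) {m : Fin n → ℝ} (hm : ∀ i, 0 < m i) {a : Fin n → ℝ}
    (ha : Function.Injective a) (hc : Central m a) :
    ∃ s : ℝ, 0 < s ∧ Equilibrium m (fun i => s * a i) := by
  obtain ⟨-, h1, mu, hmu⟩ := hc
  have hpos : 0 < mu := by
    have h := virial_pos hn hm ha
    have : ∑ i, m i * a i * ∑ j, m j * g (a i - a j) = mu := by
      rw [← mul_one mu, ← h1, Finset.mul_sum]
      refine Finset.sum_congr rfl fun i _ => ?_
      rw [← hmu i]
      ring
    linarith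
  -- the force is homogeneous of degree `-2`, hence the cube root
  have hs : 0 < mu ^ (1 / 3 : ℝ) := Real.rpow_pos_of_pos hpos _
  have hs3 : (mu ^ (1 / 3 : ℝ)) ^ 3 = mu := by
    rw [← Real.rpow_natCast, ← Real.rpow_mul hpos.le]
    norm_num
  generalize mu ^ (1 / 3 : ℝ) = s at hs hs3
  refine ⟨s, hs, fun i => ?_⟩
  have h2 : s ^ 2 * (s * a i) = s ^ 2 * ∑ j, m j * g (s * a i - s * a j) := by
    have h3 : s ^ 2 * (s * a i) = mu * a i := by
      rw [← hs3]
      ring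
    rw [h3, hmu i, Finset.mul_sum]
    refine Finset.sum_congr rfl fun j _ => ?_
    rw [← g_smul hs (a i - a j), mul_sub]
    ring
  exact mul_left_cancel₀ (pow_pos hs 2).ne' h2

lemma existsUnique_central (hn : 2 ≤ n) {m : Fin n → ℝ} (hm : ∀ i, 0 < m i)
    (p : Equiv.Perm (Fin n)) : ∃! a, Ordered p a ∧ Central m a := by
  have hinj : ∀ {a : Fin n → ℝ}, Ordered p a → Function.Injective a := fun {a} ha i j hij => by
    by_contra hne
    exact ha.ne hne hij
  have hscale : ∀ {a : Fin n → ℝ} {s : ℝ}, 0 < s → Ordered p a → Ordered p (fun i => s * a i) :=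
    fun hs ha i j hij => mul_lt_mul_of_pos_left (ha i j hij) hs
  refine existsUnique_of_exists_of_unique ?_ ?_
  · obtain ⟨a, ha, hE⟩ := exists_equilibrium hm p
    have hI : 0 < ∑ i, m i * a i ^ 2 := by
      have h := virial_pos hn hm (hinj ha)
      have h' : ∑ i, m i * a i * ∑ j, m j * g (a i - a j) = ∑ i, m i * a i ^ 2 :=
        Finset.sum_congr rfl fun i _ => by
          rw [← hE i]
          ring
      linarith
    -- testing the equation against a constant vector kills the internal forces
    have hcm : ∑ i, m i * a i = 0 := by
      have h := sum_antisymm m (fun _ => 1) (fun i j => g (a i - a j))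
        (fun i j => by rw [← neg_sub (a i), g_neg])
      simp only [sub_self, mul_zero, Finset.sum_const_zero, mul_one] at h
      have h' : ∑ i, m i * ∑ j, m j * g (a i - a j) = ∑ i, m i * a i :=
        Finset.sum_congr rfl fun i _ => by rw [← hE i]
      linarith
    obtain ⟨s, hs, hs2⟩ : ∃ s : ℝ, 0 < s ∧ s ^ 2 * ∑ i, m i * a i ^ 2 = 1 := by
      refine ⟨(Real.sqrt (∑ i, m i * a i ^ 2))⁻¹, inv_pos.mpr (Real.sqrt_pos.mpr hI), ?_⟩
      rw [inv_pow, Real.sq_sqrt hI.le, inv_mul_cancel₀ hI.ne']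
    refine ⟨fun i => s * a i, hscale hs ha, ?_, ?_, (s ^ 3)⁻¹, fun i => ?_⟩
    · rw [← mul_zero s, ← hcm, Finset.mul_sum]
      exact Finset.sum_congr rfl fun i _ => by ring
    · rw [← hs2, Finset.mul_sum]
      exact Finset.sum_congr rfl fun i _ => by ring
    · have h1 : ∑ j, m j * g (a i - a j) = s ^ 2 * ∑ j, m j * g (s * a i - s * a j) := by
        rw [Finset.mul_sum]
        refine Finset.sum_congr rfl fun j _ => ?_
        rw [← g_smul hs (a i - a j), mul_sub]
        ring
      have h2 := hE i
      rw [h1] at h2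
      show (s ^ 3)⁻¹ * (s * a i) = ∑ j, m j * g (s * a i - s * a j)
      generalize ∑ j, m j * g (s * a i - s * a j) = S at h2 ⊢
      rw [h2]
      field_simp
  · rintro a b ⟨ha, hca⟩ ⟨hb, hcb⟩
    obtain ⟨s, hs, hsE⟩ := hca.rescale hn hm (hinj ha)
    obtain ⟨t, ht, htE⟩ := hcb.rescale hn hm (hinj hb)
    have heq := equilibrium_unique hm (hscale hs ha) (hscale ht hb) hsE htE
    have heq' : ∀ i, s * a i = t * b i := fun i => congrFun heq i
    have hst : s = t := by
      have h1 : s ^ 2 * ∑ i, m i * a i ^ 2 = t ^ 2 * ∑ i, m i * b i ^ 2 := by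
        rw [Finset.mul_sum, Finset.mul_sum]
        refine Finset.sum_congr rfl fun i _ => ?_
        calc s ^ 2 * (m i * a i ^ 2) = m i * (s * a i) ^ 2 := by ring
          _ = t ^ 2 * (m i * b i ^ 2) := by rw [heq' i]; ring
      rw [hca.2.1, hcb.2.1, mul_one, mul_one] at h1
      exact (pow_left_inj₀ hs.le ht.le two_ne_zero).mp h1
    funext i
    have := heq' i
    rw [hst] at this
    exact mul_left_cancel₀ ht.ne' this

lemma ordered_symm_iff (σ : Equiv.Perm (Fin n)) (a : Fin n → ℝ) :
    Ordered σ.symm a ↔ ∀ k l : Fin n, k < l → a (σ l) < a (σ k) := by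
  refine ⟨fun h k l hkl => h _ _ (by simpa using hkl), fun h i j hij => ?_⟩
  simpa using h _ _ hij

/-- A configuration determines its decreasing ordering. -/
lemma perm_unique {a : Fin n → ℝ} {σ τ : Equiv.Perm (Fin n)}
    (hσ : ∀ k l : Fin n, k < l → a (σ l) < a (σ k))
    (hτ : ∀ k l : Fin n, k < l → a (τ l) < a (τ k)) : σ = τ := by
  have hτ' : StrictAnti (a ∘ τ) := fun k l h => hτ k l h
  have hmono : StrictMono (τ.symm ∘ σ) := fun k l hkl => by
    refine hτ'.lt_iff_gt.mp ?_
    simpa using hσ k l hkl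
  have h : (τ.symm ∘ σ : Fin n → Fin n) = id := by
    refine (hmono.range_inj strictMono_id).mp ?_
    rw [Set.range_id]
    exact (τ.symm.surjective.comp σ.surjective).range_eq
  ext k : 1
  have := congrFun h k
  simpa [Equiv.symm_apply_eq] using this

lemma exists_perm {a : Fin n → ℝ} (ha : Function.Injective a) :
    ∃ σ : Equiv.Perm (Fin n), ∀ k l : Fin n, k < l → a (σ l) < a (σ k) := by
  let σ := Tuple.sort (fun i => - a i)
  refine ⟨σ, fun k l hkl => ?_⟩
  have h1 : - a (σ k) ≤ - a (σ l) := Tuple.monotone_sort (fun i => - a i) hkl.le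
  have h2 : a (σ k) ≠ a (σ l) := fun h => hkl.ne (σ.injective (ha h))
  exact lt_of_le_of_ne (by linarith) h2.symm

end Moulton

open Moulton in
/-- Moulton: for every permutation `σ` of the `n` bodies, there is exactly
one normalized collinear central configuration with the ordering
`a_{σ(1)} > ⋯ > a_{σ(n)}`; hence there are exactly `n!` normalized collinear central
configurations, and `a ↦ −a` is a fixed-point-free involution on them (so there are
`n!/2` solutions up to reflection). -/
theorem stmt19 (n : ℕ) (hn : 2 ≤ n) (m : Fin n → ℝ) (hm : ∀ i, 0 < m i) :
    let central : (Fin n → ℝ) → Prop := fun a => ∃ lam : ℝ, ∀ i,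
      lam * a i = ∑ j ∈ Finset.univ.filter (fun j : Fin n => j ≠ i),
        m j * (a j - a i) / |a i - a j| ^ 3
    let Z : Set (Fin n → ℝ) :=
      {a | Function.Injective a ∧ (∑ i, m i * a i = 0) ∧
        (∑ i, m i * a i ^ 2 = 1) ∧ central a}
    (∀ σ : Equiv.Perm (Fin n),
      ∃! a : Fin n → ℝ, a ∈ Z ∧ ∀ k l : Fin n, k < l → a (σ l) < a (σ k)) ∧
    Z.Finite ∧ Z.ncard = Nat.factorial n ∧
    (∀ a ∈ Z, (-a) ∈ Z ∧ -a ≠ a) := by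
  intro central Z
  have hZ : ∀ a, a ∈ Z ↔ Function.Injective a ∧ Central m a := fun a => by
    have hc : central a ↔ ∃ mu : ℝ, ∀ i, mu * a i = ∑ j, m j * g (a i - a j) := by
      simp only [central, force_eq]
      refine ⟨fun ⟨l, h⟩ => ⟨-l, fun i => ?_⟩, fun ⟨l, h⟩ => ⟨-l, fun i => ?_⟩⟩
      · rw [neg_mul, h i, neg_neg]
      · rw [neg_mul, h i]
    show (_ ∧ _ ∧ _ ∧ central a) ↔ _
    rw [hc]
    rfl
  have huniq : ∀ σ : Equiv.Perm (Fin n),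
      ∃! a : Fin n → ℝ, a ∈ Z ∧ ∀ k l : Fin n, k < l → a (σ l) < a (σ k) := fun σ => by
    refine (existsUnique_congr fun a => ?_).mp (existsUnique_central hn hm σ.symm)
    rw [hZ, ← ordered_symm_iff]
    refine ⟨fun ⟨h1, h2⟩ => ⟨⟨fun i j hij => ?_, h2⟩, h1⟩, fun ⟨⟨_, h2⟩, h1⟩ => ⟨h1, h2⟩⟩
    by_contra hne
    exact h1.ne hne hij
  choose f hf hfu using huniq
  have hfinj : Function.Injective f := fun σ τ h =>
    perm_unique (hf σ).2 (by rw [h]; exact (hf τ).2)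
  have hrange : Z = Set.range f := by
    ext a
    constructor
    · intro ha
      obtain ⟨σ, hσ⟩ := exists_perm ha.1
      exact ⟨σ, (hfu σ a ⟨ha, hσ⟩).symm⟩
    · rintro ⟨σ, rfl⟩
      exact (hf σ).1
  refine ⟨fun σ => ⟨f σ, hf σ, hfu σ⟩, ?_, ?_, ?_⟩
  · rw [hrange]
    exact Set.finite_range f
  · rw [hrange, ← Set.image_univ, Set.ncard_image_of_injective _ hfinj, Set.ncard_univ,
      Nat.card_perm, Nat.card_fin]
  · intro a ha
    obtain ⟨h1, h2, h3, mu, h4⟩ := (hZ a).mp ha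
    constructor
    · refine (hZ _).mpr ⟨neg_injective.comp h1, ?_, ?_, mu, fun i => ?_⟩
      · simp [h2]
      · simpa using h3
      · have h5 : ∀ j, g ((-a) i - (-a) j) = - g (a i - a j) := fun j => by
          rw [← g_neg]
          congr 1
          simp only [Pi.neg_apply]
          ring
        simp only [h5]
        simp only [mul_neg, Finset.sum_neg_distrib, ← h4 i, Pi.neg_apply]
    · intro h
      -- a fixed point is the zero vector, which has moment of inertia `0`
      have h0 : ∀ i, a i = 0 := fun i => by
        have := congrFun h i
        simp only [Pi.neg_apply] at this
        linarith
      simp [h0] at h3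
end
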